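/- arXiv:2402.02575 — 2 statements merged into one kernel-verified Lean document; each statement's English description precedes it below -/
import Mathlib

section
/- For every ε > 0 there exists an fiid labelling f : X → (V → Fin 5) of the 5-regular tree T_5 such that for μ-a.e. x ∈ X the labelling f(x) is a proper coloring of G (i.e. f(x)(u) ≠ f(x)(v) whenever u and v are adjacent), and such that for every vertex v ∈ V, μ({x : f(x)(v) = 4}) < ε; that is, T_5 has fiid 5-colorings which are approximate 4-colorings. -/
open MeasureTheory

/-
Start the local-improvement dynamics for unfriendly two-colourings: in each round an independent set
of vertices is marked at random, and a marked vertex changes colour if most of its neighbours have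
its colour. An automorphism exchanging the endpoints of an edge makes the two endpoints contribute
equally to the expected decrease of the agreement along the edge. The expected agreement around a
vertex is bounded, so the expected number of its changes is finite, the dynamics converges and its
limit is unfriendly. With degree at most five, each vertex has at most two neighbours of its own
colour, so the components of the monochromatic graph are paths and cycles. Removing a sparse random
independent set cuts them into finite pieces, each of which is properly two-coloured from its vertex
with the least label. This refines the limit to four colours, and the removed vertices receive the
fifth.
-/

open Set Filter ProbabilityTheory
open scoped ENNReal

/-! ### Isomorphisms of trees -/

theorem existsUnique_adj_dist_lt {V : Type*} {G : SimpleGraph V} (hG : G.IsTree) {a v : V}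
    (hv : v ≠ a) : ∃! p, G.Adj v p ∧ G.dist a p < G.dist a v := by
  obtain ⟨p, hp⟩ := (hG.connected a v).exists_walk_length_eq_dist
  have hnil : ¬ p.Nil := fun hnil => hv hnil.eq.symm
  refine ⟨p.penultimate, ⟨(p.adj_penultimate hnil).symm, ?_⟩, ?_⟩
  · have hle : G.dist a p.penultimate ≤ p.dropLast.length := SimpleGraph.dist_le _
    have hlen : p.dropLast.length + 1 = p.length := p.length_dropLast_add_one hnil
    omega
  · rintro q ⟨hadj, hlt⟩
    obtain ⟨r, hr⟩ := (hG.connected a q).exists_walk_length_eq_dist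
    have hpath : (r.concat hadj.symm).IsPath := by
      apply SimpleGraph.Walk.isPath_of_length_eq_dist
      have := hG.dist_eq_dist_add_one_of_adj a hadj
      rw [SimpleGraph.Walk.length_concat]
      omega
    have heq : (⟨p, p.isPath_of_length_eq_dist hp⟩ : G.Path a v) = ⟨_, hpath⟩ :=
      (hG.isAcyclic.subsingleton_path a v).elim _ _
    rw [Subtype.mk.injEq] at heq
    simp [heq]

theorem isPath_map_of_injOn_neighborSet {V V' : Type*} {G : SimpleGraph V}
    {G' : SimpleGraph V'} (hG' : G'.IsAcyclic) (f : G →g G')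
    (hf : ∀ v, InjOn f (G.neighborSet v)) {u v : V} {p : G.Walk u v} (hp : p.IsPath) :
    (p.map f).IsPath := by
  rw [hG'.isPath_iff_isChain]
  induction p with
  | nil => simp
  | @cons u v w huv p ih =>
    obtain ⟨hpath, hu⟩ := (SimpleGraph.Walk.cons_isPath_iff huv p).1 hp
    cases p with
    | nil => simp
    | @cons _ x _ hvx p =>
      have hux : u ≠ x := by rintro rfl; simp at hu
      have hfux : f u ≠ f x := fun h => hux (hf v huv.symm hvx h)
      have hne : s(f u, f v) ≠ s(f v, f x) := by
        rw [Sym2.eq_swap, Ne, Sym2.congr_right]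
        exact hfux
      exact List.IsChain.cons_cons hne (ih hpath)

theorem exists_iso_of_bijOn_neighborSet {V V' : Type*} {G : SimpleGraph V} {G' : SimpleGraph V'}
    (hG : G.Connected) (hG' : G'.IsTree) (f : V → V')
    (hf : ∀ v, BijOn f (G.neighborSet v) (G'.neighborSet (f v))) :
    ∃ φ : G ≃g G', ⇑φ = f := by
  let F : G →g G' := ⟨f, fun {u v} huv => (hf u).mapsTo huv⟩
  have hinj : f.Injective := by
    intro u v huv
    obtain ⟨p, hp⟩ := (hG u v).exists_isPath
    have hmap := isPath_map_of_injOn_neighborSet hG'.isAcyclic F (fun v => (hf v).injOn) hp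
    exact ((SimpleGraph.Walk.nil_map_iff F).1 (hmap.nil_iff_eq.2 huv)).eq
  have hsurj : f.Surjective := by
    intro y
    have ⟨o⟩ := hG.nonempty
    have hreach := hG'.connected (f o) y
    rw [SimpleGraph.reachable_iff_reflTransGen] at hreach
    induction hreach with
    | refl => exact ⟨o, rfl⟩
    | tail _ hadj ih =>
      obtain ⟨v, rfl⟩ := ih
      exact ((hf v).surjOn hadj).imp fun _ => And.right
  refine ⟨⟨Equiv.ofBijective f ⟨hinj, hsurj⟩, fun {u v} => ⟨fun huv => ?_, (F.map_adj ·)⟩⟩, rfl⟩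
  obtain ⟨w, huw, hwv⟩ := (hf u).surjOn huv
  exact hinj hwv ▸ huw

theorem exists_bijOn_apply_eq {α β : Type*} {s : Set α} {t : Set β} (hst : Nonempty (s ≃ t))
    {a : α} {b : β} (ha : a ∈ s) (hb : b ∈ t) : ∃ e : α → β, BijOn e s t ∧ e a = b := by
  classical
  obtain ⟨e⟩ := hst
  let e' : s ≃ t := e.trans (Equiv.swap (e ⟨a, ha⟩) ⟨b, hb⟩)
  have he' : ∀ x : s, Function.extend Subtype.val (fun x => (e' x : β)) (fun _ => b) x = e' x :=
    Subtype.val_injective.extend_apply _ _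
  refine ⟨Function.extend Subtype.val (fun x => (e' x : β)) (fun _ => b), ⟨?_, ?_, ?_⟩, ?_⟩
  · exact fun x hx => (he' ⟨x, hx⟩).symm ▸ (e' ⟨x, hx⟩).2
  · intro x hx y hy hxy
    rw [he' ⟨x, hx⟩, he' ⟨y, hy⟩] at hxy
    exact congrArg Subtype.val (e'.injective (Subtype.ext hxy))
  · exact fun y hy => ⟨e'.symm ⟨y, hy⟩, (e'.symm ⟨y, hy⟩).2, by rw [he']; simp⟩
  · rw [he' ⟨a, ha⟩]; simp [e']

theorem exists_eq_apply_parent {V α : Type*} (a : V) (rank : V → ℕ) (par : V → V)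
    (hpar : ∀ v, v ≠ a → rank (par v) < rank v) (init : α) (step : V → α → α) :
    ∃ F : V → α, F a = init ∧ ∀ v, v ≠ a → F v = step v (F (par v)) := by
  classical
  let wf : WellFounded (fun u v : V => rank u < rank v) := (measure rank).wf
  refine ⟨wf.fix fun v ih => if h : v = a then init else step v (ih (par v) (hpar v h)), ?_, ?_⟩
  · rw [WellFounded.fix_eq, dif_pos rfl]
  · intro v hv
    rw [WellFounded.fix_eq, dif_neg hv]

theorem exists_parent_of_isTree {V : Type*} {G : SimpleGraph V} (hG : G.IsTree) {a b : V}
    (hab : G.Adj a b) : ∃ par : V → V, par a = b ∧ (∀ v, G.Adj v (par v)) ∧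
      (∀ v, v ≠ a → G.dist a (par v) < G.dist a v) ∧
      ∀ v u, G.Adj v u → (v ≠ a ∧ par v = u) ∨ (u ≠ a ∧ par u = v) := by
  have hpar : ∀ v, ∃ p, (v = a → p = b) ∧ G.Adj v p ∧ (v ≠ a → G.dist a p < G.dist a v) := by
    intro v
    rcases eq_or_ne v a with rfl | hv
    · exact ⟨b, fun _ => rfl, hab, fun h => absurd rfl h⟩
    · obtain ⟨p, ⟨hvp, hlt⟩, -⟩ := existsUnique_adj_dist_lt hG hv
      exact ⟨p, fun h => absurd h hv, hvp, fun _ => hlt⟩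
  choose par hpara hadj hcloser using hpar
  have hpar_eq : ∀ {v u}, G.Adj v u → G.dist a u < G.dist a v → v ≠ a ∧ par v = u := by
    intro v u hvu hlt
    have hv : v ≠ a := by
      rintro rfl
      simp only [SimpleGraph.dist_self, not_lt_zero] at hlt
    exact ⟨hv, (existsUnique_adj_dist_lt hG hv).unique ⟨hadj v, hcloser v hv⟩ ⟨hvu, hlt⟩⟩
  refine ⟨par, hpara a rfl, hadj, hcloser, fun v u hvu => ?_⟩
  rcases hG.dist_eq_dist_add_one_of_adj a hvu with hdist | hdist
  · exact .inl (hpar_eq hvu (by omega))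
  · exact .inr (hpar_eq hvu.symm (by omega))

theorem exists_bijOn_neighborSet_of_isTree {V V' : Type*} {G : SimpleGraph V}
    {G' : SimpleGraph V'} (hG : G.IsTree)
    (hnbr : ∀ v v', Nonempty (G.neighborSet v ≃ G'.neighborSet v'))
    {a b : V} {a' b' : V'} (hab : G.Adj a b) (hab' : G'.Adj a' b') :
    ∃ f : V → V', f a = a' ∧ f b = b' ∧
      ∀ v, BijOn f (G.neighborSet v) (G'.neighborSet (f v)) := by
  have : Nonempty V' := ⟨a'⟩
  have hE : ∀ v p v' p', G.Adj v p → G'.Adj v' p' →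
      ∃ e : V → V', BijOn e (G.neighborSet v) (G'.neighborSet v') ∧ e p = p' :=
    fun v p v' p' h h' => exists_bijOn_apply_eq (hnbr v v') h h'
  choose! E hE using hE
  obtain ⟨par, hpara, hadj, hcloser, hpar⟩ := exists_parent_of_isTree hG hab
  -- `F v` consists of the images of `v` and of its parent.
  obtain ⟨F, hFa, hF⟩ := exists_eq_apply_parent a (G.dist a) par hcloser (a', b')
    fun v q => (E (par v) (par (par v)) q.1 q.2 v, q.1)
  have hparb : par b = a := ((hpar a b hab).resolve_left fun h => h.1 rfl).2
  have hsnd : ∀ v, (F v).2 = (F (par v)).1 := by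
    intro v
    rcases eq_or_ne v a with rfl | hv
    · rw [hpara, hF b hab.ne', hparb, hFa, hpara]
      exact (hE v b a' b' hab hab').2.symm
    · rw [hF v hv]
  have hstep : ∀ v, v ≠ a →
      (F v).1 = E (par v) (par (par v)) (F (par v)).1 (F (par (par v))).1 v := by
    intro v hv
    rw [hF v hv, hsnd]
  have hadj' : ∀ v, G'.Adj (F v).1 (F (par v)).1 := by
    intro v
    induction h : G.dist a v using Nat.strong_induction_on generalizing v with
    | _ n ih =>
      rcases eq_or_ne v a with rfl | hv
      · rwa [← hsnd, hFa]
      · have hbij := (hE _ _ _ _ (hadj (par v)) (ih _ (h ▸ hcloser v hv) _ rfl)).1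
        exact hstep v hv ▸ (hbij.mapsTo (hadj v).symm).symm
  refine ⟨fun v => (F v).1, congrArg Prod.fst hFa, ?_, fun v => ?_⟩
  · change (F b).1 = b'
    rw [← hpara, ← hsnd, hFa]
  obtain ⟨hbij, hEpar⟩ := hE v (par v) (F v).1 (F (par v)).1 (hadj v) (hadj' v)
  refine hbij.congr fun u hvu => ?_
  rcases hpar v u hvu with ⟨-, rfl⟩ | ⟨hu, rfl⟩
  · exact hEpar
  · exact (hstep u hu).symm

theorem exists_iso_apply_eq_of_isTree {V V' : Type*} {G : SimpleGraph V} {G' : SimpleGraph V'}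
    (hG : G.IsTree) (hG' : G'.IsTree)
    (hnbr : ∀ v v', Nonempty (G.neighborSet v ≃ G'.neighborSet v'))
    {a b : V} {a' b' : V'} (hab : G.Adj a b) (hab' : G'.Adj a' b') :
    ∃ φ : G ≃g G', φ a = a' ∧ φ b = b' := by
  obtain ⟨f, hfa, hfb, hbij⟩ := exists_bijOn_neighborSet_of_isTree hG hnbr hab hab'
  obtain ⟨φ, rfl⟩ := exists_iso_of_bijOn_neighborSet hG.connected hG' f hbij
  exact ⟨φ, hfa, hfb⟩

/-! ### Infinite product measures -/

section InfiniteProduct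

variable {ι : Type*} {X : ι → Type*} [∀ i, MeasurableSpace (X i)] (P : ∀ i, Measure (X i))
  [∀ i, IsProbabilityMeasure (P i)]

theorem indepFun_eval_comp_infinitePi {κ : Type*} {i : ι} {g : κ → ι} (hi : i ∉ range g) :
    IndepFun (fun ω => ω i) (fun ω k => ω (g k)) (Measure.infinitePi P) := by
  have hindep := indep_iSup_of_disjoint (fun i => (measurable_pi_apply i).comap_le)
    (iIndepFun_infinitePi (P := P) fun _ => measurable_id) (disjoint_singleton_left.2 hi)
  refine indep_of_indep_of_le_left (indep_of_indep_of_le_right hindep ?_) ?_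
  · simp only [MeasurableSpace.pi, MeasurableSpace.comap_iSup, MeasurableSpace.comap_comp]
    exact iSup_le fun k => le_iSup₂_of_le (g k) (mem_range_self k) le_rfl
  · exact le_iSup₂_of_le i rfl le_rfl

theorem infinitePi_map_eval_prodMk_comp {κ : Type*} {i : ι} {g : κ → ι} (hi : i ∉ range g)
    (hg : g.Injective) : (Measure.infinitePi P).map (fun ω => (ω i, fun k => ω (g k))) =
      (P i).prod (Measure.infinitePi fun k => P (g k)) := by
  have hcomp : Measurable fun (ω : ∀ i, X i) k => ω (g k) := by fun_prop
  rw [(indepFun_iff_map_prod_eq_prod_map_map (measurable_pi_apply i).aemeasurable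
    hcomp.aemeasurable).1 (indepFun_eval_comp_infinitePi P hi), Measure.infinitePi_map_eval,
    Measure.map_infinitePi_infinitePi_of_inj hg]

theorem iIndepSet_pi_infinitePi {κ : Type*} {W : κ → Finset ι}
    (hW : Pairwise (Function.onFun Disjoint W)) {t : ∀ i, Set (X i)}
    (ht : ∀ i, MeasurableSet (t i)) :
    iIndepSet (fun k => Set.pi (W k) t) (Measure.infinitePi P) := by
  classical
  rw [iIndepSet_iff_meas_biInter
    fun k => MeasurableSet.pi (W k).countable_toSet fun i _ => ht i]
  intro J
  have hinter : ⋂ k ∈ J, Set.pi (W k : Set ι) t = Set.pi (J.biUnion W : Finset ι) t := by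
    ext ω
    simp only [mem_iInter, Set.mem_pi, Finset.mem_coe, Finset.mem_biUnion]
    exact ⟨fun h i ⟨k, hk, hi⟩ => h k hk i hi, fun h k hk i hi => h i ⟨k, hk, hi⟩⟩
  rw [hinter, Measure.infinitePi_pi P fun i _ => ht i, Finset.prod_biUnion (hW.set_pairwise _)]
  exact Finset.prod_congr rfl fun k _ => (Measure.infinitePi_pi P fun i _ => ht i).symm

theorem ae_frequently_mem_pi {W : ℕ → Finset ι} (hW : Pairwise (Function.onFun Disjoint W))
    {d : ℕ} (hd : ∀ n, (W n).card ≤ d) {t : ∀ i, Set (X i)} (ht : ∀ i, MeasurableSet (t i))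
    {q : ℝ≥0∞} (hq : q ≠ 0) (hqt : ∀ i, q ≤ P i (t i)) :
    ∀ᵐ ω ∂Measure.infinitePi P, ∃ᶠ n in atTop, ω ∈ Set.pi (W n) t := by
  have hmeas : ∀ n, MeasurableSet (Set.pi (W n : Set ι) t) :=
    fun n => MeasurableSet.pi (W n).countable_toSet fun i _ => ht i
  have hbound : ∀ n, (min q 1) ^ d ≤ Measure.infinitePi P (Set.pi (W n) t) := by
    intro n
    rw [Measure.infinitePi_pi P fun i _ => ht i]
    calc (min q 1) ^ d
        ≤ (min q 1) ^ (W n).card := pow_le_pow_right_of_le_one' (min_le_right _ _) (hd n)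
      _ = ∏ _i ∈ W n, min q 1 := by rw [Finset.prod_const]
      _ ≤ ∏ i ∈ W n, P i (t i) := Finset.prod_le_prod' fun i _ => (min_le_left _ _).trans (hqt i)
  have hsum : ∑' n, Measure.infinitePi P (Set.pi (W n) t) = ∞ := by
    refine top_unique ?_
    rw [← ENNReal.tsum_const_eq_top_of_ne_zero (α := ℕ)
      (pow_ne_zero d (lt_min (pos_iff_ne_zero.2 hq) one_pos).ne')]
    exact ENNReal.tsum_le_tsum hbound
  have hlimsup := measure_limsup_eq_one hmeas (iIndepSet_pi_infinitePi P hW ht) hsum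
  have hae := (prob_compl_eq_zero_iff (MeasurableSet.measurableSet_limsup hmeas)).2 hlimsup
  filter_upwards [compl_mem_ae_iff.2 hae] with ω hω
  rwa [compl_compl, mem_limsup_iff_frequently_mem] at hω

end InfiniteProduct

theorem exists_measurable_map_uniform_eq {α : Type*} [MeasurableSpace α] [StandardBorelSpace α]
    [Nonempty α] (ν : Measure α) [IsProbabilityMeasure ν] :
    ∃ g : ℝ → α, Measurable g ∧ (volume.restrict (Icc (0 : ℝ) 1)).map g = ν := by
  obtain ⟨f, hf, hfν⟩ := Measure.exists_measurable_map_eq ν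
  have hproj : Measurable (projIcc (0 : ℝ) 1 zero_le_one) := continuous_projIcc.measurable
  refine ⟨f ∘ projIcc 0 1 zero_le_one, hf.comp hproj, ?_⟩
  rw [← map_comap_subtype_coe measurableSet_Icc,
    Measure.map_map (hf.comp hproj) measurable_subtype_coe, ← hfν]
  congr 1
  funext y
  simp only [Function.comp_apply, projIcc_val]

theorem infinitePi_map_flip_apply {ι κ α β : Type*} [MeasurableSpace α] [MeasurableSpace β]
    (P : Measure α) [IsProbabilityMeasure P] (Q : κ → Measure β) [∀ k, IsProbabilityMeasure (Q k)]
    {g : α → κ → β} (hg : Measurable g) (hgQ : P.map g = Measure.infinitePi Q) :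
    (Measure.infinitePi fun _ : ι => P).map (fun x k i => g (x i) k) =
      Measure.infinitePi fun k => Measure.infinitePi fun _ : ι => Q k := by
  rw [← Measure.infinitePi_map_curry fun k (_ : ι) => Q k,
    ← Measure.map_infinitePi_infinitePi_of_inj (P := fun p : ι × κ => Q p.2)
      (f := fun p : κ × ι => (p.2, p.1)) Prod.swap_injective,
    ← Measure.infinitePi_map_curry_symm fun _ => Q, ← hgQ,
    ← Measure.infinitePi_map_pi _ fun _ => hg, Measure.map_map (by fun_prop) (by fun_prop),
    Measure.map_map (by fun_prop) (by fun_prop), Measure.map_map (by fun_prop) (by fun_prop)]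
  rfl

theorem ae_injective_infinitePi {ι : Type*} [Countable ι] {α : Type*} [MeasurableSpace α]
    [MeasurableEq α] (P : Measure α) [IsProbabilityMeasure P] [NullSingletonClass P] :
    ∀ᵐ x ∂Measure.infinitePi fun _ : ι => P, Function.Injective x := by
  have hne : ∀ᵐ x ∂Measure.infinitePi fun _ : ι => P, ∀ i j, i ≠ j → x i ≠ x j := by
    simp only [ae_all_iff]
    intro i j hij
    have hprod : ∀ᵐ p ∂P.prod P, p ∈ {p : α × α | p.1 ≠ p.2} := by
      have hdiag : MeasurableSet {p : α × α | p.1 ≠ p.2} :=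
        (measurableSet_eq_fun measurable_fst measurable_snd).compl
      rw [Measure.ae_prod_mem_iff_ae_ae_mem hdiag]
      exact .of_forall fun a => (Measure.ae_ne P a).mono fun _ => Ne.symm
    rw [← Measure.infinitePi_map_eval_prod (P := fun _ : ι => P) hij] at hprod
    exact ae_of_ae_map (f := fun x : ι → α => (x i, x j)) (by fun_prop) hprod
  filter_upwards [hne] with x hx i j hij
  exact not_imp_not.1 (hx i j) hij


theorem exists_bool_measure_lt {ε : ℝ} (hε : 0 < ε) : ∃ b : Measure Bool,
    IsProbabilityMeasure b ∧ b {true} < ENNReal.ofReal ε ∧ ∀ i, b {i} ≠ 0 := by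
  obtain ⟨p, hp, hpε⟩ := exists_between (lt_min hε one_pos)
  obtain ⟨hpε, hp1⟩ := lt_min_iff.1 hpε
  let q : unitInterval := ⟨p, hp.le, hp1.le⟩
  have htrue : bernoulliMeasure true false q {true} = ENNReal.ofReal p := by
    rw [← ofReal_measureReal,
      bernoulliMeasure_real_apply_of_mem_of_notMem q (.singleton _) (by simp) (by simp)]
  have hfalse : bernoulliMeasure true false q {false} = ENNReal.ofReal (1 - p) := by
    rw [← ofReal_measureReal,
      bernoulliMeasure_real_apply_of_notMem_of_mem q (.singleton _) (by simp) (by simp)]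
  refine ⟨bernoulliMeasure true false q, inferInstance, ?_, ?_⟩
  · rw [htrue]
    exact (ENNReal.ofReal_lt_ofReal_iff hε).2 hpε
  · rintro (_ | _)
    · rw [hfalse]
      exact (ENNReal.ofReal_pos.2 (sub_pos.2 hp1)).ne'
    · rw [htrue]
      exact (ENNReal.ofReal_pos.2 hp).ne'

/-! ### Isolated marks -/

section Marks

variable {V : Type*} (G : SimpleGraph V)

/-- The vertex `v` carries a mark of `m` and none of its neighbours does. -/
def IsolatedMark (m : V → Bool) (v : V) : Prop :=
  m v = true ∧ ∀ u, G.Adj v u → m u = false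

variable {G} in
theorem IsolatedMark.not_adj {m : V → Bool} {u v : V} (hu : IsolatedMark G m u)
    (hv : IsolatedMark G m v) : ¬ G.Adj u v := fun huv =>
  Bool.false_ne_true ((hu.2 v huv).symm.trans hv.1)

variable {G} in
theorem isolatedMark_comp_iso (φ : G ≃g G) (m : V → Bool) (v : V) :
    IsolatedMark G (fun u => m (φ u)) v ↔ IsolatedMark G m (φ v) := by
  refine and_congr_right fun _ => ⟨fun h u hu => ?_, fun h u hu => h _ (φ.map_adj_iff.2 hu)⟩
  simpa using h (φ.symm u) (by rwa [← φ.map_adj_iff, φ.apply_symm_apply])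

theorem measurable_isolatedMark [Countable V] {Ω : Type*} [MeasurableSpace Ω] {m : Ω → V → Bool}
    (hm : Measurable m) (v : V) : Measurable fun ω => IsolatedMark G (m ω) v := by
  have hmark : ∀ u i, Measurable fun ω => m ω u = i := fun u i =>
    measurableSet_setOfPred.1 ((measurable_pi_apply u).comp hm (measurableSet_singleton i))
  exact (hmark v true).and (.forall fun u => measurable_const.imp (hmark u false))

section MarksLaw

/-- The law of a sequence of independent markings, each of which marks the vertices independently
with the law `b`. -/
noncomputable abbrev marksLaw (V : Type*) (b : Measure Bool) : Measure (ℕ → V → Bool) :=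
  Measure.infinitePi fun _ : ℕ => Measure.infinitePi fun _ : V => b

variable [G.LocallyFinite] (b : Measure Bool) [IsProbabilityMeasure b]

open Classical in
theorem isolatedMark_of_mem_pi {m : V → Bool} {v : V} {S : Set V} (hv : v ∈ S)
    (hS : ∀ u, G.Adj v u → u ∉ S)
    (hm : m ∈ Set.pi (insert v (G.neighborFinset v) : Finset V) fun u => {decide (u ∈ S)}) :
    IsolatedMark G m v := by
  simp only [Finset.coe_insert, SimpleGraph.coe_neighborFinset, Set.mem_pi, Set.mem_insert_iff,
    SimpleGraph.mem_neighborSet, mem_singleton_iff, forall_eq_or_imp, hv, decide_true] at hm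
  exact ⟨hm.1, fun u hu => (hm.2 u hu).trans (decide_eq_false (hS u hu))⟩

theorem infinitePi_isolatedMark_ne_zero (hb : ∀ i, b {i} ≠ 0) (v : V) :
    Measure.infinitePi (fun _ : V => b) {m | IsolatedMark G m v} ≠ 0 := by
  refine ne_bot_of_le_ne_bot ?_ (measure_mono fun m hm =>
    isolatedMark_of_mem_pi G (mem_singleton v) (fun u hu => hu.ne') hm)
  rw [Measure.infinitePi_pi _ fun _ _ => .singleton _]
  exact Finset.prod_ne_zero_iff.2 fun u _ => hb _

theorem exists_seq_mem_pairwise_disjoint {f : V → Finset V}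
    (hf : ∀ u, {v | u ∈ f v}.Finite) {A : Set V} (hA : A.Infinite) :
    ∃ a : ℕ → V, (∀ n, a n ∈ A) ∧ Pairwise (Function.onFun Disjoint (f ∘ a)) := by
  obtain ⟨a, haA, ha⟩ := exists_seq_of_forall_finset_exists' (· ∈ A)
    (fun u v => Disjoint (f u) (f v)) fun F _ => by
      have hfin : (⋃ u ∈ F, ⋃ z ∈ f u, {v | z ∈ f v}).Finite :=
        F.finite_toSet.biUnion fun u _ => (f u).finite_toSet.biUnion fun z _ => hf z
      obtain ⟨v, hvA, hv⟩ := (hA.sdiff hfin).nonempty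
      simp only [mem_iUnion, not_exists] at hv
      exact ⟨v, hvA, fun u hu => Finset.disjoint_left.2 fun z hz hzv => hv u hu z hz hzv⟩
  exact ⟨a, haA, ha⟩

theorem ae_exists_mem_isolatedMark (hb : ∀ i, b {i} ≠ 0) {d : ℕ} (hd : ∀ v, G.degree v ≤ d)
    {A : Set V} (hA : A.Infinite) :
    ∀ᵐ m ∂Measure.infinitePi fun _ : V => b, ∃ v ∈ A, IsolatedMark G m v := by
  classical
  obtain ⟨a, haA, ha⟩ := exists_seq_mem_pairwise_disjoint
    (f := fun v => insert v (G.neighborFinset v)) (fun u => by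
      refine (insert u (G.neighborFinset u)).finite_toSet.subset fun v hv => ?_
      simpa [G.adj_comm, eq_comm] using hv) hA
  have hsep : ∀ n u, G.Adj (a n) u → u ∉ range a := by
    rintro n u hu ⟨k, rfl⟩
    have hnk : n ≠ k := fun h => hu.ne (congrArg a h)
    exact Finset.disjoint_left.1 (ha hnk)
      (Finset.mem_insert_of_mem ((G.mem_neighborFinset _ _).2 hu)) (Finset.mem_insert_self _ _)
  have hae := ae_frequently_mem_pi (fun _ => b) ha (d := d + 1)
    (fun n => (Finset.card_insert_le _ _).trans (Nat.succ_le_succ (hd (a n))))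
    (t := fun u => {decide (u ∈ range a)}) (fun _ => .singleton _)
    (q := min (b {true}) (b {false})) (by simp [min_eq_iff, hb])
    (fun u => by cases decide (u ∈ range a) <;> simp)
  filter_upwards [hae] with m hm
  obtain ⟨n, hn⟩ := hm.exists
  exact ⟨a n, haA n, isolatedMark_of_mem_pi G (mem_range_self n) (hsep n) hn⟩

theorem ae_frequently_isolatedMark [Countable V] (hb : ∀ i, b {i} ≠ 0) (v : V) :
    ∀ᵐ m ∂marksLaw V b, ∃ᶠ t in atTop, IsolatedMark G (m t) v := by
  have hae := ae_frequently_mem_pi (fun _ : ℕ => Measure.infinitePi fun _ : V => b)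
    (W := fun t => {t}) (fun _ _ => Finset.disjoint_singleton.2) (d := 1) (fun _ => le_rfl)
    (fun _ => measurableSet_setOfPred.2 (measurable_isolatedMark G measurable_id v))
    (infinitePi_isolatedMark_ne_zero G b hb v) (fun _ => le_rfl)
  filter_upwards [hae] with m hm
  simpa using hm

end MarksLaw

end Marks

/-! ### Unfriendly colourings -/

section Unfriendly

variable {V : Type*} (G : SimpleGraph V)

open Classical in
/-- The sign `1` if two vertices with colours `p` and `q` have the same colour, `-1` otherwise. -/
noncomputable def agreement (p q : Prop) : ℝ := if p ↔ q then 1 else -1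

theorem abs_agreement (p q : Prop) : |agreement p q| = 1 := by
  by_cases h : p ↔ q <;> simp [agreement, h]

theorem measurable_agreement {Ω : Type*} [MeasurableSpace Ω] {p q : Ω → Prop} (hp : Measurable p)
    (hq : Measurable q) : Measurable fun ω => agreement (p ω) (q ω) :=
  Measurable.ite (measurableSet_setOfPred.2 (hp.iff hq)) measurable_const measurable_const

section Dynamics

variable [G.LocallyFinite]

/-- The two-colouring `c` (a predicate) is unfriendly at `v` if at most half of the neighbours of
`v` have the colour of `v`. -/
def UnfriendlyAt (c : V → Prop) (v : V) : Prop :=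
  ∑ u ∈ G.neighborFinset v, agreement (c u) (c v) ≤ 0

/-- One round of the local-improvement dynamics changes the colour of `v` if `c` is not unfriendly
at `v` and `v` carries an isolated mark; adjacent vertices never change colour in the same
round. -/
def Flips (c : V → Prop) (m : V → Bool) (v : V) : Prop :=
  ¬ UnfriendlyAt G c v ∧ IsolatedMark G m v

/-- The two-colouring after `t` rounds, started from a constant colouring and driven by the marks
`m 0, …, m (t - 1)`. -/
def dynamics (m : ℕ → V → Bool) : ℕ → V → Prop
  | 0 => fun _ => False
  | t + 1 => fun v => ¬ (dynamics m t v ↔ Flips G (dynamics m t) (m t) v)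

/-- The limit of the dynamics, with `False` as the value at vertices that change colour
infinitely often. -/
def limitColoring (m : ℕ → V → Bool) (v : V) : Prop :=
  ∀ᶠ t in atTop, dynamics G m t v

open Classical in
theorem one_le_sum_agreement_of_not_unfriendlyAt {c : V → Prop} {v : V} (h : ¬ UnfriendlyAt G c v) :
    1 ≤ ∑ u ∈ G.neighborFinset v, agreement (c u) (c v) := by
  have hint : ∑ u ∈ G.neighborFinset v, agreement (c u) (c v) =
      ((∑ u ∈ G.neighborFinset v, if c u ↔ c v then 1 else -1 : ℤ) : ℝ) := by
    push_cast [agreement]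
    rfl
  rw [UnfriendlyAt, not_le, hint] at h
  rw [hint]
  exact_mod_cast h

section Equivariance

variable {G} (φ : G ≃g G)

theorem unfriendlyAt_comp_iso (c : V → Prop) (v : V) :
    UnfriendlyAt G (fun u => c (φ u)) v ↔ UnfriendlyAt G c (φ v) := by
  rw [UnfriendlyAt, UnfriendlyAt]
  refine iff_of_eq (congrArg (· ≤ 0) (Finset.sum_equiv φ.toEquiv (fun u => ?_) fun _ _ => rfl))
  simpa using φ.map_adj_iff.symm

theorem flips_comp_iso (c : V → Prop) (m : V → Bool) (v : V) :
    Flips G (fun u => c (φ u)) (fun u => m (φ u)) v ↔ Flips G c m (φ v) := by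
  rw [Flips, Flips, unfriendlyAt_comp_iso, isolatedMark_comp_iso]

theorem dynamics_comp_iso (m : ℕ → V → Bool) (t : ℕ) :
    dynamics G (fun s u => m s (φ u)) t = fun v => dynamics G m t (φ v) := by
  induction t with
  | zero => rfl
  | succ t ih =>
    funext v
    simp only [dynamics, ih, flips_comp_iso]

theorem limitColoring_comp_iso (m : ℕ → V → Bool) (v : V) :
    limitColoring G (fun s u => m s (φ u)) v ↔ limitColoring G m (φ v) := by
  simp only [limitColoring, dynamics_comp_iso]

end Equivariance

section Measurability

variable {Ω : Type*} [MeasurableSpace Ω]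

theorem measurable_unfriendlyAt {c : Ω → V → Prop} (hc : ∀ v, Measurable fun ω => c ω v) (v : V) :
    Measurable fun ω => UnfriendlyAt G (c ω) v :=
  measurableSet_setOfPred.1 <| measurableSet_le
    (Finset.measurable_sum _ fun u _ => measurable_agreement (hc u) (hc v)) measurable_const

variable [Countable V]

theorem measurable_flips {c : Ω → V → Prop} {m : Ω → V → Bool}
    (hc : ∀ v, Measurable fun ω => c ω v) (hm : Measurable m) (v : V) :
    Measurable fun ω => Flips G (c ω) (m ω) v :=
  (measurable_unfriendlyAt G hc v).not.and (measurable_isolatedMark G hm v)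

theorem measurable_dynamics (t : ℕ) (v : V) : Measurable fun m => dynamics G m t v := by
  induction t generalizing v with
  | zero => exact measurable_const
  | succ t ih =>
    have hflips := measurable_flips G ih (measurable_pi_apply t) v
    exact ((ih v).iff hflips).not

theorem measurable_limitColoring (v : V) : Measurable fun m => limitColoring G m v := by
  simp only [limitColoring, eventually_atTop]
  exact .exists fun T => .forall fun t => measurable_const.imp (measurable_dynamics G t v)

end Measurability

open Classical in
/-- The decrease of `agreement (c u) (c v)` caused by `v` changing its colour. -/
noncomputable def flipGain (c : V → Prop) (m : V → Bool) (v u : V) : ℝ :=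
  if Flips G c m v then 2 * agreement (c u) (c v) else 0

theorem agreement_dynamics_succ (m : ℕ → V → Bool) (t : ℕ) {v u : V} (hvu : G.Adj v u) :
    agreement (dynamics G m (t + 1) u) (dynamics G m (t + 1) v) =
      agreement (dynamics G m t u) (dynamics G m t v) -
        flipGain G (dynamics G m t) (m t) v u - flipGain G (dynamics G m t) (m t) u v := by
  have hnot : ¬ (Flips G (dynamics G m t) (m t) v ∧ Flips G (dynamics G m t) (m t) u) :=
    fun h => h.1.2.not_adj h.2.2 hvu
  simp only [flipGain, dynamics, agreement]
  by_cases hv : Flips G (dynamics G m t) (m t) v <;>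
    by_cases hu : Flips G (dynamics G m t) (m t) u <;>
    by_cases hcu : dynamics G m t u <;> by_cases hcv : dynamics G m t v <;>
    simp_all <;> norm_num

open Classical in
theorem ite_flips_le_sum_flipGain (c : V → Prop) (m : V → Bool) (v : V) :
    (if Flips G c m v then 2 else 0) ≤ ∑ u ∈ G.neighborFinset v, flipGain G c m v u := by
  by_cases h : Flips G c m v
  · simp only [flipGain, h, if_true, ← Finset.mul_sum]
    linarith [one_le_sum_agreement_of_not_unfriendlyAt G h.1]
  · simp [flipGain, h]

variable {G} in
theorem flipGain_comp_iso (φ : G ≃g G) (c : V → Prop) (m : V → Bool) (v u : V) :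
    flipGain G (fun z => c (φ z)) (fun z => m (φ z)) v u = flipGain G c m (φ v) (φ u) := by
  unfold flipGain
  congr 1
  exact propext (flips_comp_iso φ c m v)

section Convergence

variable [Countable V]

theorem measurable_flipGain {Ω : Type*} [MeasurableSpace Ω] {c : Ω → V → Prop} {m : Ω → V → Bool}
    (hc : ∀ v, Measurable fun ω => c ω v) (hm : Measurable m) (v u : V) :
    Measurable fun ω => flipGain G (c ω) (m ω) v u :=
  Measurable.ite (measurableSet_setOfPred.2 (measurable_flips G hc hm v))
    ((measurable_agreement (hc u) (hc v)).const_mul 2) measurable_const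

variable (b : Measure Bool) [IsProbabilityMeasure b]

theorem integrable_agreement_dynamics (t : ℕ) (u v : V) :
    Integrable (fun m => agreement (dynamics G m t u) (dynamics G m t v)) (marksLaw V b) :=
  .of_bound (measurable_agreement (measurable_dynamics G t u)
    (measurable_dynamics G t v)).aestronglyMeasurable 1 (.of_forall fun _ => (abs_agreement _ _).le)

theorem measurable_flipGain_dynamics (t : ℕ) (v u : V) :
    Measurable fun m => flipGain G (dynamics G m t) (m t) v u :=
  measurable_flipGain G (measurable_dynamics G t) (measurable_pi_apply t) v u

theorem integrable_flipGain_dynamics (t : ℕ) (v u : V) :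
    Integrable (fun m => flipGain G (dynamics G m t) (m t) v u) (marksLaw V b) := by
  refine .of_bound (measurable_flipGain_dynamics G t v u).aestronglyMeasurable 2
    (.of_forall fun m => ?_)
  unfold flipGain
  split_ifs <;> simp [abs_agreement]

variable {G} in
theorem integral_flipGain_dynamics_comp_iso (φ : G ≃g G) (t : ℕ) (v u : V) :
    ∫ m, flipGain G (dynamics G m t) (m t) (φ v) (φ u) ∂marksLaw V b =
      ∫ m, flipGain G (dynamics G m t) (m t) v u ∂marksLaw V b := by
  have hmap : (marksLaw V b).map (fun m t v => m t (φ v)) = marksLaw V b := by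
    rw [Measure.infinitePi_map_pi (fun _ => Measure.infinitePi fun _ : V => b)
      (f := fun _ m v => m (φ v)) (fun _ => by fun_prop)]
    exact congrArg _ (funext fun _ =>
      Measure.map_infinitePi_infinitePi_of_inj (P := fun _ : V => b) φ.injective)
  have hmeas : Measurable fun (m : ℕ → V → Bool) t v => m t (φ v) := by fun_prop
  conv_rhs => rw [← hmap, integral_map hmeas.aemeasurable
    (measurable_flipGain_dynamics G t v u).aestronglyMeasurable]
  simp only [dynamics_comp_iso, flipGain_comp_iso]

variable (hflip : ∀ u v, G.Adj u v → ∃ φ : G ≃g G, φ u = v ∧ φ v = u)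

include hflip in
theorem integral_agreement_dynamics_succ (t : ℕ) {v u : V} (hvu : G.Adj v u) :
    ∫ m, agreement (dynamics G m (t + 1) u) (dynamics G m (t + 1) v) ∂marksLaw V b =
      ∫ m, agreement (dynamics G m t u) (dynamics G m t v) ∂marksLaw V b -
        2 * ∫ m, flipGain G (dynamics G m t) (m t) v u ∂marksLaw V b := by
  obtain ⟨φ, hφv, hφu⟩ := hflip v u hvu
  have hswap := integral_flipGain_dynamics_comp_iso b φ t v u
  rw [hφv, hφu] at hswap
  simp_rw [agreement_dynamics_succ G _ t hvu]
  have hgain := integrable_flipGain_dynamics G b t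
  have hagree := integrable_agreement_dynamics G b t u v
  rw [integral_sub (by fun_prop) (hgain u v), integral_sub hagree (hgain v u), hswap]
  ring

theorem two_mul_measureReal_flips_le (t : ℕ) (v : V) :
    2 * (marksLaw V b).real {m | Flips G (dynamics G m t) (m t) v} ≤
      ∑ u ∈ G.neighborFinset v, ∫ m, flipGain G (dynamics G m t) (m t) v u ∂marksLaw V b := by
  have hmeas : MeasurableSet {m | Flips G (dynamics G m t) (m t) v} :=
    measurableSet_setOfPred.2
      (measurable_flips G (measurable_dynamics G t) (measurable_pi_apply t) v)
  calc 2 * (marksLaw V b).real {m | Flips G (dynamics G m t) (m t) v}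
      = ∫ m, {m | Flips G (dynamics G m t) (m t) v}.indicator (fun _ => (2 : ℝ)) m
          ∂marksLaw V b := by
        rw [integral_indicator_const _ hmeas, smul_eq_mul, mul_comm]
    _ ≤ ∫ m, ∑ u ∈ G.neighborFinset v, flipGain G (dynamics G m t) (m t) v u ∂marksLaw V b := by
        refine integral_mono ((integrable_const _).indicator hmeas)
          (integrable_finsetSum _ fun u _ => integrable_flipGain_dynamics G b t v u) fun m => ?_
        exact ite_flips_le_sum_flipGain G (dynamics G m t) (m t) v
    _ = _ := integral_finsetSum _ fun u _ => integrable_flipGain_dynamics G b t v u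

include hflip in
theorem tsum_measure_flips_ne_top (v : V) :
    ∑' t, (marksLaw V b) {m | Flips G (dynamics G m t) (m t) v} ≠ ∞ := by
  let Φ : ℕ → ℝ := fun t => ∑ u ∈ G.neighborFinset v,
    ∫ m, agreement (dynamics G m t u) (dynamics G m t v) ∂marksLaw V b
  let p : ℕ → ℝ := fun t => (marksLaw V b).real {m | Flips G (dynamics G m t) (m t) v}
  have hstep : ∀ t, 4 * p t ≤ Φ t - Φ (t + 1) := fun t => by
    have hsucc : Φ (t + 1) = Φ t -
        2 * ∑ u ∈ G.neighborFinset v, ∫ m, flipGain G (dynamics G m t) (m t) v u ∂marksLaw V b := by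
      rw [Finset.mul_sum, ← Finset.sum_sub_distrib]
      exact Finset.sum_congr rfl fun u hu =>
        integral_agreement_dynamics_succ G b hflip t ((G.mem_neighborFinset v u).1 hu)
    linarith [two_mul_measureReal_flips_le G b t v]
  have hbound : ∀ t, |Φ t| ≤ G.degree v := fun t => by
    refine (Finset.abs_sum_le_sum_abs _ _).trans ((Finset.sum_le_card_nsmul _ _ 1 ?_).trans_eq ?_)
    · intro u _
      have hone := norm_integral_le_of_norm_le_const (μ := marksLaw V b)
        (.of_forall fun m => (Real.norm_eq_abs _).trans_le <|
          (abs_agreement (dynamics G m t u) (dynamics G m t v)).le)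
      simpa using hone
    · simp
  have hsum : Summable p := by
    refine summable_of_sum_range_le (c := G.degree v) (fun _ => measureReal_nonneg) fun n => ?_
    have htelescope : ∑ t ∈ Finset.range n, 4 * p t ≤ Φ 0 - Φ n :=
      (Finset.sum_le_sum fun t _ => hstep t).trans_eq (Finset.sum_range_sub' Φ n)
    rw [← Finset.mul_sum] at htelescope
    linarith [(abs_le.1 (hbound 0)).2, (abs_le.1 (hbound n)).1]
  exact (tsum_congr fun t => ofReal_measureReal).symm.trans_ne hsum.tsum_ofReal_ne_top

end Convergence

theorem eventually_dynamics_iff_limitColoring {m : ℕ → V → Bool} {v : V}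
    (h : ∀ᶠ t in atTop, ¬ Flips G (dynamics G m t) (m t) v) :
    ∀ᶠ t in atTop, (dynamics G m t v ↔ limitColoring G m v) := by
  obtain ⟨T, hT⟩ := eventually_atTop.1 h
  have hconst : ∀ t ≥ T, (dynamics G m t v ↔ dynamics G m T v) := fun t ht => by
    induction t, ht using Nat.le_induction with
    | base => rfl
    | succ t ht ih => simp only [dynamics, hT t ht, iff_false, not_not, ih]
  have hlim : limitColoring G m v ↔ dynamics G m T v :=
    (eventually_congr (eventually_atTop.2 ⟨T, hconst⟩)).trans eventually_const
  exact eventually_atTop.2 ⟨T, fun t ht => (hconst t ht).trans hlim.symm⟩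

theorem unfriendlyAt_congr {c c' : V → Prop} {v : V} (hv : c v ↔ c' v)
    (hnbr : ∀ u ∈ G.neighborFinset v, (c u ↔ c' u)) : UnfriendlyAt G c v ↔ UnfriendlyAt G c' v := by
  rw [UnfriendlyAt, UnfriendlyAt, propext hv,
    Finset.sum_congr rfl fun u hu => by rw [propext (hnbr u hu)]]

theorem ae_unfriendlyAt_limitColoring [Countable V] (b : Measure Bool) [IsProbabilityMeasure b]
    (hb : ∀ i, b {i} ≠ 0) (hflip : ∀ u v, G.Adj u v → ∃ φ : G ≃g G, φ u = v ∧ φ v = u) :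
    ∀ᵐ m ∂marksLaw V b, ∀ v, UnfriendlyAt G (limitColoring G m) v := by
  filter_upwards [ae_all_iff.2 fun v => ae_frequently_isolatedMark G b hb v,
    ae_all_iff.2 fun v => ae_eventually_notMem (tsum_measure_flips_ne_top G b hflip v)]
    with m hmark hstable v
  have hlim := fun u => eventually_dynamics_iff_limitColoring G (hstable u)
  obtain ⟨t, hmark, hstable, hv, hnbr⟩ := ((hmark v).and_eventually <| (hstable v).and <|
    (hlim v).and <| (eventually_all_finset (G.neighborFinset v)).2 fun u _ => hlim u).exists
  rw [← unfriendlyAt_congr G hv hnbr]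
  by_contra h
  exact hstable ⟨h, hmark⟩

end Dynamics

end Unfriendly

/-! ### Components of the monochromatic graph -/

section Components

variable {V : Type*}

/-- The edges of `G` whose endpoints have the same colour in the two-colouring `c`. -/
def monochromaticGraph (G : SimpleGraph V) (c : V → Prop) : SimpleGraph V where
  Adj u v := G.Adj u v ∧ (c u ↔ c v)
  symm := ⟨fun _ _ h => ⟨h.1.symm, h.2.symm⟩⟩
  loopless := ⟨fun _ h => h.1.ne rfl⟩

/-- The graph, still on all vertices, of the edges of `K` with no endpoint in `S`. -/
def edgesAvoiding (K : SimpleGraph V) (S : V → Prop) : SimpleGraph V where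
  Adj u v := K.Adj u v ∧ ¬ S u ∧ ¬ S v
  symm := ⟨fun _ _ h => ⟨h.1.symm, h.2.2, h.2.1⟩⟩
  loopless := ⟨fun _ h => h.1.ne rfl⟩

theorem monochromaticGraph_le (G : SimpleGraph V) (c : V → Prop) : monochromaticGraph G c ≤ G :=
  fun _ _ h => h.1

theorem edgesAvoiding_le (K : SimpleGraph V) (S : V → Prop) : edgesAvoiding K S ≤ K :=
  fun _ _ h => h.1

/-- The endpoints of the paths of `K` that start with the edge from `v` to `a`. -/
def arm (K : SimpleGraph V) (v a : V) : Set V :=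
  {z | ∃ (h : K.Adj v a) (p : K.Walk a z), (SimpleGraph.Walk.cons h p).IsPath}

section Arms

variable {K : SimpleGraph V} (hK : ∀ v, (K.neighborSet v).encard ≤ 2)

include hK in
theorem eq_of_adj_of_ne_of_encard_neighborSet_le_two {v a b b' : V} (ha : K.Adj v a)
    (hb : K.Adj v b) (hb' : K.Adj v b') (hab : a ≠ b) (hab' : a ≠ b') : b = b' := by
  by_contra h
  have hthree : ({a, b, b'} : Set V).encard = 3 := encard_eq_three.2 ⟨a, b, b', hab, hab', h, rfl⟩
  have hle : ({a, b, b'} : Set V).encard ≤ 2 := (encard_le_encard (by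
    rintro z (rfl | rfl | rfl) <;> assumption)).trans (hK v)
  rw [hthree] at hle
  exact absurd hle (by decide)

include hK in
theorem mem_support_or_mem_support_of_isPath_cons {v a x y : V} (h : K.Adj v a) (p : K.Walk a x)
    (q : K.Walk a y) (hp : (SimpleGraph.Walk.cons h p).IsPath)
    (hq : (SimpleGraph.Walk.cons h q).IsPath) : y ∈ p.support ∨ x ∈ q.support := by
  induction p generalizing v with
  | nil => exact .inr q.start_mem_support
  | cons hab p ih =>
    cases q with
    | nil => exact .inl (SimpleGraph.Walk.start_mem_support _)
    | cons hab' q =>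
      obtain rfl := eq_of_adj_of_ne_of_encard_neighborSet_le_two hK h.symm hab hab'
        (fun hv => by simp [hv] at hp) (fun hv => by simp [hv] at hq)
      exact (ih hab q hp.of_cons hq.of_cons).imp (List.mem_cons_of_mem _) (List.mem_cons_of_mem _)

theorem not_of_mem_support_of_adj {S : V → Prop} {v a y z : V} (h : (edgesAvoiding K S).Adj v a)
    (q : (edgesAvoiding K S).Walk a y) (hz : z ∈ q.support) : ¬ S z := by
  induction q generalizing v with
  | nil => exact List.mem_singleton.1 hz ▸ h.2.2
  | cons hab q ih =>
    obtain rfl | hz := List.mem_cons.1 hz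
    exacts [h.2.2, ih hab hz]

theorem arm_mono {H : SimpleGraph V} (hHK : H ≤ K) (v a : V) : arm H v a ⊆ arm K v a := by
  rintro z ⟨h, p, hp⟩
  exact ⟨hHK h, p.mapLe hHK, hp.mapLe hHK⟩

include hK in
theorem finite_arm_edgesAvoiding {S : V → Prop} {v a : V}
    (hS : (arm K v a).Infinite → ∃ z ∈ arm K v a, S z) :
    (arm (edgesAvoiding K S) v a).Finite := by
  by_cases hfin : (arm K v a).Finite
  · exact hfin.subset (arm_mono (edgesAvoiding_le K S) v a)
  obtain ⟨x, ⟨h, p, hp⟩, hx⟩ := hS hfin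
  refine p.support.finite_toSet.subset ?_
  rintro y ⟨h', q, hq⟩
  have hqK := hq.mapLe (edgesAvoiding_le K S)
  refine (mem_support_or_mem_support_of_isPath_cons hK h p (q.mapLe _) hp hqK).resolve_right ?_
  rw [SimpleGraph.Walk.support_mapLe_eq_support]
  exact fun hxq => not_of_mem_support_of_adj h' q hxq hx

theorem finite_setOf_reachable_of_finite_arm {v : V} (hv : (K.neighborSet v).Finite)
    (harm : ∀ a, (arm K v a).Finite) : {z | K.Reachable v z}.Finite := by
  refine ((hv.biUnion fun a _ => harm a).insert v).subset fun z hz => ?_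
  obtain ⟨p, hp⟩ := SimpleGraph.Reachable.exists_isPath hz
  cases p with
  | nil => exact mem_insert _ _
  | cons h p => exact .inr (mem_biUnion h ⟨h, p, hp⟩)

include hK in
theorem ae_finite_reachable_edgesAvoiding [Countable V] (G : SimpleGraph V) [G.LocallyFinite]
    (b : Measure Bool) [IsProbabilityMeasure b] (hb : ∀ i, b {i} ≠ 0) {d : ℕ}
    (hd : ∀ v, G.degree v ≤ d) :
    ∀ᵐ m ∂Measure.infinitePi fun _ : V => b,
      ∀ v, {z | (edgesAvoiding K (IsolatedMark G m)).Reachable v z}.Finite := by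
  have hhit : ∀ᵐ m ∂Measure.infinitePi fun _ : V => b, ∀ v a, (arm K v a).Infinite →
      ∃ z ∈ arm K v a, IsolatedMark G m z := by
    simp only [ae_all_iff]
    exact fun v a harm => ae_exists_mem_isolatedMark G b hb hd harm
  filter_upwards [hhit] with m hm v
  exact finite_setOf_reachable_of_finite_arm
    ((finite_of_encard_le_coe (hK v)).subset fun a ha => edgesAvoiding_le K _ ha)
    fun a => finite_arm_edgesAvoiding hK (hm v a)

end Arms

open Classical in
theorem encard_neighborSet_monochromaticGraph_le (G : SimpleGraph V) [G.LocallyFinite]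
    {c : V → Prop} {v : V} (h : UnfriendlyAt G c v) {k : ℕ} (hdeg : G.degree v ≤ 2 * k + 1) :
    ((monochromaticGraph G c).neighborSet v).encard ≤ k := by
  have hset : (monochromaticGraph G c).neighborSet v =
      ((G.neighborFinset v).filter fun u => c u ↔ c v : Finset V) := by
    ext u
    simp [monochromaticGraph, iff_comm]
  have hcard := (G.neighborFinset v).card_filter_add_card_filter_not (fun u => c u ↔ c v)
  simp only [UnfriendlyAt, agreement, Finset.sum_ite, Finset.sum_const, nsmul_eq_mul, mul_one,
    mul_neg, ← sub_eq_add_neg, sub_nonpos, Nat.cast_le] at h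
  rw [G.card_neighborFinset_eq_degree] at hcard
  rw [hset, encard_coe_eq_coe_finsetCard]
  exact_mod_cast (by omega : _ ≤ k)

section EvenFromRoot

/-- The vertex `v` is at even distance from the vertex of its component with the least label.
Whenever the component is bipartite, all walks to that vertex have the same parity. -/
def EvenFromRoot (H : SimpleGraph V) (x : V → ℝ) (v : V) : Prop :=
  ∃ r, (∃ p : H.Walk v r, Even p.length) ∧ ∀ z, H.Reachable v z → x r ≤ x z

variable {H : SimpleGraph V} {x : V → ℝ} {u v : V}

theorem not_even_length_of_adj (hH : H.IsBipartite) (huv : H.Adj u v) {r : V} (p : H.Walk u r)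
    (q : H.Walk v r) (hp : Even p.length) : ¬ Even q.length := by
  intro hq
  let c : H.Coloring Bool := hH.toColoring (by simp)
  rw [c.even_length_iff_congr] at hp hq
  have hc := c.valid huv
  grind

theorem EvenFromRoot.not_of_adj (hH : H.IsBipartite) (hx : x.Injective) (huv : H.Adj u v)
    (hu : EvenFromRoot H x u) : ¬ EvenFromRoot H x v := by
  rintro ⟨r', ⟨q, hq⟩, hr'⟩
  obtain ⟨r, ⟨p, hp⟩, hr⟩ := hu
  obtain rfl : r = r' := hx ((hr r' (huv.reachable.trans q.reachable)).antisymm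
    (hr' r (huv.symm.reachable.trans p.reachable)))
  exact not_even_length_of_adj hH huv p q hp hq

theorem evenFromRoot_or_of_adj (hfin : {z | H.Reachable u z}.Finite) (huv : H.Adj u v) :
    EvenFromRoot H x u ∨ EvenFromRoot H x v := by
  obtain ⟨r, ⟨p⟩, hr⟩ := exists_min_image _ x hfin ⟨u, .refl u⟩
  by_cases hp : Even p.length
  · exact .inl ⟨r, ⟨p, hp⟩, hr⟩
  · refine .inr ⟨r, ⟨.cons huv.symm p, ?_⟩, fun z hz => hr z (huv.reachable.trans hz)⟩
    rw [SimpleGraph.Walk.length_cons, Nat.even_add_one]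
    exact hp

theorem evenFromRoot_comp_iso {H H' : SimpleGraph V} (ψ : H ≃g H') (x : V → ℝ) (v : V) :
    EvenFromRoot H (fun u => x (ψ u)) v ↔ EvenFromRoot H' x (ψ v) := by
  constructor
  · rintro ⟨r, ⟨p, hp⟩, hr⟩
    refine ⟨ψ r, ⟨p.map ψ.toHom, by simpa using hp⟩, fun z hz => ?_⟩
    obtain ⟨z, rfl⟩ := ψ.surjective z
    exact hr z (ψ.reachable_iff.1 hz)
  · rintro ⟨r, ⟨p, hp⟩, hr⟩
    obtain ⟨r, rfl⟩ := ψ.surjective r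
    refine ⟨r, ⟨(p.map ψ.symm.toHom).copy (ψ.symm_apply_apply v) (ψ.symm_apply_apply r), ?_⟩,
      fun z hz => hr _ (ψ.reachable_iff.2 hz)⟩
    simpa using hp

end EvenFromRoot

section RandomGraph

variable [Countable V] {Ω : Type*} [MeasurableSpace Ω] {H : Ω → SimpleGraph V}
  (hH : ∀ u v, Measurable fun ω => (H ω).Adj u v)

include hH

theorem measurable_exists_walk_length_eq (n : ℕ) (u v : V) :
    Measurable fun ω => ∃ p : (H ω).Walk u v, p.length = n := by
  induction n generalizing u with
  | zero =>
    have hzero : ∀ ω, (∃ p : (H ω).Walk u v, p.length = 0) ↔ u = v := fun ω =>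
      ⟨fun ⟨p, hp⟩ => p.eq_of_length_eq_zero hp, fun h => h ▸ ⟨.nil, rfl⟩⟩
    simp only [hzero, measurable_const]
  | succ n ih =>
    have hsucc : ∀ ω, (∃ p : (H ω).Walk u v, p.length = n + 1) ↔
        ∃ w, (H ω).Adj u w ∧ ∃ p : (H ω).Walk w v, p.length = n := fun ω => by
      refine ⟨fun ⟨p, hp⟩ => ?_, fun ⟨w, h, p, hp⟩ => ⟨.cons h p, by simp [hp]⟩⟩
      cases p with
      | nil => simp at hp
      | cons h p => exact ⟨_, h, p, by simpa using hp⟩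
    simp only [hsucc]
    exact .exists fun w => (hH u w).and (ih w)

theorem measurable_reachable (u v : V) : Measurable fun ω => (H ω).Reachable u v := by
  have hlength : ∀ ω, (H ω).Reachable u v ↔ ∃ n, ∃ p : (H ω).Walk u v, p.length = n := fun ω =>
    ⟨fun ⟨p⟩ => ⟨p.length, p, rfl⟩, fun ⟨_, p, _⟩ => p.reachable⟩
  simp only [hlength]
  exact .exists fun n => measurable_exists_walk_length_eq hH n u v

theorem measurable_finite_reachable (u : V) :
    Measurable fun ω => {v | (H ω).Reachable u v}.Finite := by
  have hfinset : ∀ ω, {v | (H ω).Reachable u v}.Finite ↔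
      ∃ F : Finset V, ∀ v, (H ω).Reachable u v → v ∈ F := fun ω =>
    ⟨fun h => ⟨h.toFinset, fun v hv => h.mem_toFinset.2 hv⟩,
      fun ⟨F, hF⟩ => F.finite_toSet.subset hF⟩
  simp only [hfinset]
  exact .exists fun F => .forall fun v => (measurable_reachable hH u v).imp measurable_const

theorem measurable_evenFromRoot {x : Ω → V → ℝ} (hx : Measurable x) (v : V) :
    Measurable fun ω => EvenFromRoot (H ω) (x ω) v := by
  have heven : ∀ ω r, (∃ p : (H ω).Walk v r, Even p.length) ↔
      ∃ n, Even n ∧ ∃ p : (H ω).Walk v r, p.length = n := fun ω r =>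
    ⟨fun ⟨p, hp⟩ => ⟨p.length, hp, p, rfl⟩, fun ⟨_, hn, p, hp⟩ => ⟨p, hp ▸ hn⟩⟩
  have hle : ∀ r z, Measurable fun ω => x ω r ≤ x ω z := fun r z =>
    measurableSet_setOfPred.1 (measurableSet_le ((measurable_pi_apply r).comp hx)
      ((measurable_pi_apply z).comp hx))
  simp only [EvenFromRoot, heven]
  exact .exists fun r => .and
    (.exists fun n => measurable_const.and (measurable_exists_walk_length_eq hH n v r))
    (.forall fun z => (measurable_reachable hH v z).imp (hle r z))

end RandomGraph

end Components

/-! ### The five-colouring -/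

section FiveColoring

variable {V : Type*} (G : SimpleGraph V)

open Classical in
/-- The colouring with colour `4` on `S` and, off `S`, with the colour in `0, 1, 2, 3` that encodes
two bits: `c v` and the parity of `v` in its component of the graph of monochromatic edges of `c`
avoiding `S`. The labels `x` choose the roots of the components. -/
noncomputable def fiveColoring (c S : V → Prop) (x : V → ℝ) (v : V) : Fin 5 :=
  if S v then 4 else
    (if c v then 2 else 0) +
      if EvenFromRoot (edgesAvoiding (monochromaticGraph G c) S) x v then 1 else 0

theorem fiveColoring_eq_four_iff {c S : V → Prop} {x : V → ℝ} {v : V} :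
    fiveColoring G c S x v = 4 ↔ S v := by
  unfold fiveColoring
  split_ifs <;> simp_all

variable {G} in
theorem fiveColoring_ne_of_adj (hG : G.IsBipartite) {c S : V → Prop} {x : V → ℝ}
    (hx : x.Injective) {u v : V} (huv : G.Adj u v) (hS : ¬ (S u ∧ S v))
    (hfin : {z | (edgesAvoiding (monochromaticGraph G c) S).Reachable u z}.Finite) :
    fiveColoring G c S x u ≠ fiveColoring G c S x v := by
  set H := edgesAvoiding (monochromaticGraph G c) S with hH
  have hbip : H.IsBipartite :=
    hG.mono_left ((edgesAvoiding_le _ S).trans (monochromaticGraph_le G c))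
  have hparity : ¬ S u → ¬ S v → (c u ↔ c v) → (EvenFromRoot H x u ↔ ¬ EvenFromRoot H x v) := by
    intro hu hv hc
    have hadj : H.Adj u v := ⟨⟨huv, hc⟩, hu, hv⟩
    exact ⟨fun h => h.not_of_adj hbip hx hadj, (evenFromRoot_or_of_adj hfin hadj).resolve_right⟩
  simp only [fiveColoring, ← hH]
  by_cases hu : S u <;> by_cases hv : S v <;> by_cases hcu : c u <;> by_cases hcv : c v <;>
    by_cases hpu : EvenFromRoot H x u <;> by_cases hpv : EvenFromRoot H x v <;>
    simp_all

variable {G} in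
theorem fiveColoring_comp_iso (φ : G ≃g G) (c S : V → Prop) (x : V → ℝ) (v : V) :
    fiveColoring G (fun u => c (φ u)) (fun u => S (φ u)) (fun u => x (φ u)) v =
      fiveColoring G c S x (φ v) := by
  let ψ : edgesAvoiding (monochromaticGraph G fun u => c (φ u)) (fun u => S (φ u)) ≃g
      edgesAvoiding (monochromaticGraph G c) S :=
    ⟨φ.toEquiv, and_congr_left fun _ => and_congr_left fun _ => φ.map_adj_iff⟩
  have hparity : EvenFromRoot (edgesAvoiding (monochromaticGraph G fun u => c (φ u))
      fun u => S (φ u)) (fun u => x (φ u)) v ↔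
      EvenFromRoot (edgesAvoiding (monochromaticGraph G c) S) x (φ v) :=
    evenFromRoot_comp_iso ψ x v
  unfold fiveColoring
  rw [propext hparity]

theorem measurable_adj_edgesAvoiding_monochromaticGraph {Ω : Type*} [MeasurableSpace Ω]
    {c S : Ω → V → Prop} (hc : ∀ v, Measurable fun ω => c ω v)
    (hS : ∀ v, Measurable fun ω => S ω v) (u v : V) :
    Measurable fun ω => (edgesAvoiding (monochromaticGraph G (c ω)) (S ω)).Adj u v :=
  (measurable_const.and ((hc u).iff (hc v))).and ((hS u).not.and (hS v).not)

theorem measurable_fiveColoring [Countable V] {Ω : Type*} [MeasurableSpace Ω]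
    {c S : Ω → V → Prop} {x : Ω → V → ℝ} (hc : ∀ v, Measurable fun ω => c ω v)
    (hS : ∀ v, Measurable fun ω => S ω v) (hx : Measurable x) :
    Measurable fun ω => fiveColoring G (c ω) (S ω) (x ω) := by
  refine measurable_pi_lambda _ fun v => ?_
  have hparity := measurable_evenFromRoot
    (measurable_adj_edgesAvoiding_monochromaticGraph G hc hS) hx v
  exact .ite (measurableSet_setOfPred.2 (hS v)) measurable_const <|
    (Measurable.ite (measurableSet_setOfPred.2 (hc v)) measurable_const measurable_const).add
    (.ite (measurableSet_setOfPred.2 hparity)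
      measurable_const measurable_const)

section FactorColoring

variable [G.LocallyFinite]

/-- The five-colouring computed from the labels `x` by reading from `x v`, through `g`, the marks of
`v`: the mark with index `0` decides the vertices of colour `4`, the others drive the
dynamics. -/
noncomputable def factorColoring (g : ℝ → ℕ → Bool) (x : V → ℝ) : V → Fin 5 :=
  fiveColoring G (limitColoring G fun t v => g (x v) (t + 1)) (IsolatedMark G fun v => g (x v) 0) x

variable {G} in
theorem factorColoring_comp_iso (g : ℝ → ℕ → Bool) (φ : G ≃g G) (x : V → ℝ) (v : V) :
    factorColoring G g (fun u => x (φ u)) v = factorColoring G g x (φ v) := by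
  rw [factorColoring, factorColoring, ← fiveColoring_comp_iso φ]
  congr 1 <;> funext u <;> apply propext
  exacts [limitColoring_comp_iso φ (fun t v => g (x v) (t + 1)) u,
    isolatedMark_comp_iso φ (fun v => g (x v) 0) u]

theorem measurable_factorColoring [Countable V] {g : ℝ → ℕ → Bool} (hg : Measurable g) :
    Measurable (factorColoring G g) :=
  measurable_fiveColoring G
    (fun v => (measurable_limitColoring G v).comp (by fun_prop))
    (measurable_isolatedMark G (by fun_prop)) measurable_id

theorem ae_finite_reachable_edgesAvoiding_monochromaticGraph [Countable V]
    (hdeg : ∀ v, G.degree v ≤ 5) (hflip : ∀ u v, G.Adj u v → ∃ φ : G ≃g G, φ u = v ∧ φ v = u)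
    (b : Measure Bool) [IsProbabilityMeasure b] (hb : ∀ i, b {i} ≠ 0) :
    ∀ᵐ p ∂(Measure.infinitePi fun _ : V => b).prod (marksLaw V b), ∀ v,
      {z | (edgesAvoiding (monochromaticGraph G (limitColoring G p.2))
        (IsolatedMark G p.1)).Reachable v z}.Finite := by
  have hmeas : Measurable fun p : (V → Bool) × (ℕ → V → Bool) => ∀ v,
      {z | (edgesAvoiding (monochromaticGraph G (limitColoring G p.2))
        (IsolatedMark G p.1)).Reachable v z}.Finite :=
    .forall fun v => measurable_finite_reachable
      (measurable_adj_edgesAvoiding_monochromaticGraph G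
        (fun u => (measurable_limitColoring G u).comp measurable_snd)
        (measurable_isolatedMark G measurable_fst)) v
  have hset := measurableSet_setOfPred.2 hmeas
  rw [Measure.ae_prod_iff_ae_ae hset, Measure.ae_ae_comm hset]
  filter_upwards [ae_unfriendlyAt_limitColoring G b hb hflip] with m hm
  exact ae_finite_reachable_edgesAvoiding
    (fun v => encard_neighborSet_monochromaticGraph_le G (hm v) (hdeg v)) G b hb hdeg

theorem infinitePi_map_marks {P : Measure ℝ} [IsProbabilityMeasure P] {b : Measure Bool}
    [IsProbabilityMeasure b] {g : ℝ → ℕ → Bool} (hg : Measurable g)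
    (hgb : P.map g = Measure.infinitePi fun _ => b) :
    (Measure.infinitePi fun _ : V => P).map
        (fun x => (fun v => g (x v) 0, fun t v => g (x v) (t + 1))) =
      (Measure.infinitePi fun _ : V => b).prod (marksLaw V b) := by
  rw [← infinitePi_map_eval_prodMk_comp (i := 0) (g := (· + 1))
    (fun _ : ℕ => Measure.infinitePi fun _ : V => b) (by simp) (add_left_injective 1),
    ← infinitePi_map_flip_apply P (fun _ => b) hg hgb,
    Measure.map_map (by fun_prop) (by fun_prop)]
  rfl

theorem ae_factorColoring_ne [Countable V] (hbip : G.IsBipartite) (hdeg : ∀ v, G.degree v ≤ 5)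
    (hflip : ∀ u v, G.Adj u v → ∃ φ : G ≃g G, φ u = v ∧ φ v = u) {P : Measure ℝ}
    [IsProbabilityMeasure P] [NullSingletonClass P] {b : Measure Bool} [IsProbabilityMeasure b]
    (hb : ∀ i, b {i} ≠ 0) {g : ℝ → ℕ → Bool} (hg : Measurable g)
    (hgb : P.map g = Measure.infinitePi fun _ => b) :
    ∀ᵐ x ∂Measure.infinitePi fun _ : V => P,
      ∀ u v, G.Adj u v → factorColoring G g x u ≠ factorColoring G g x v := by
  have hfin := ae_finite_reachable_edgesAvoiding_monochromaticGraph G hdeg hflip b hb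
  rw [← infinitePi_map_marks hg hgb] at hfin
  filter_upwards [ae_of_ae_map (by fun_prop) hfin, ae_injective_infinitePi P]
    with x hx hinj u v huv
  exact fiveColoring_ne_of_adj hbip hinj huv (fun h => h.1.not_adj h.2 huv) (hx u)

theorem measure_factorColoring_eq_four_le {P : Measure ℝ} [IsProbabilityMeasure P]
    {b : Measure Bool} [IsProbabilityMeasure b] {g : ℝ → ℕ → Bool} (hg : Measurable g)
    (hgb : P.map g = Measure.infinitePi fun _ => b) (v : V) :
    (Measure.infinitePi fun _ : V => P) {x | factorColoring G g x v = 4} ≤ b {true} := by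
  have hmark : MeasurePreserving (fun x : V → ℝ => g (x v) 0)
      (Measure.infinitePi fun _ : V => P) b :=
    (measurePreserving_eval_infinitePi (fun _ : ℕ => b) 0).comp
      ((MeasurePreserving.mk hg hgb).comp (measurePreserving_eval_infinitePi (fun _ : V => P) v))
  calc (Measure.infinitePi fun _ : V => P) {x | factorColoring G g x v = 4}
      ≤ (Measure.infinitePi fun _ : V => P) ((fun x => g (x v) 0) ⁻¹' {true}) :=
        measure_mono fun x hx => ((fiveColoring_eq_four_iff G).1 hx).1
    _ = b {true} := hmark.measure_preimage (MeasurableSet.singleton _).nullMeasurableSet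

end FactorColoring

end FiveColoring

theorem fiid_five_coloring_of_T5_approximate_four_coloring_general
    {V : Type*} [Countable V] (G : SimpleGraph V) [G.LocallyFinite] (hbip : G.IsBipartite)
    (hdeg : ∀ v, G.degree v ≤ 5) (hflip : ∀ u v, G.Adj u v → ∃ φ : G ≃g G, φ u = v ∧ φ v = u)
    (μ : Measure (V → ℝ))
    (hμ : ∀ s : Finset V, Measure.map (fun (x : V → ℝ) (v : s) => x v) μ =
      Measure.pi (fun _ : s => volume.restrict (Icc (0 : ℝ) 1)))
    (ε : ℝ) (hε : 0 < ε) :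
    ∃ f : (V → ℝ) → (V → Fin 5),
      Measurable f ∧
      (∀ (φ : G ≃g G) (x : V → ℝ) (v : V),
        f (fun u => x (φ.symm u)) v = f x (φ.symm v)) ∧
      (∀ᵐ x ∂μ, ∀ u v : V, G.Adj u v → f x u ≠ f x v) ∧
      (∀ v : V, μ {x | f x v = 4} < ENNReal.ofReal ε) := by
  have : IsProbabilityMeasure (volume.restrict (Icc (0 : ℝ) 1)) := ⟨by simp⟩
  obtain rfl : μ = Measure.infinitePi fun _ : V => volume.restrict (Icc (0 : ℝ) 1) :=
    IsProjectiveLimit.unique (α := fun _ : V => ℝ)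
      (P := fun s => Measure.pi fun _ : s => volume.restrict (Icc (0 : ℝ) 1))
      hμ (Measure.isProjectiveLimit_infinitePi fun _ : V => volume.restrict (Icc (0 : ℝ) 1))
  obtain ⟨b, _, hbε, hb⟩ := exists_bool_measure_lt hε
  obtain ⟨g, hg, hgb⟩ := exists_measurable_map_uniform_eq (Measure.infinitePi fun _ : ℕ => b)
  exact ⟨factorColoring G g, measurable_factorColoring G hg,
    fun φ => factorColoring_comp_iso g φ.symm,
    ae_factorColoring_ne G hbip hdeg hflip hb hg hgb,
    fun v => (measure_factorColoring_eq_four_le G hg hgb v).trans_lt hbε⟩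

/-- For every ε > 0, the 5-regular tree admits an fiid labelling with 5 labels which is
a.e. proper (everywhere) and assigns the label 4 to a given vertex with probability less than ε. -/
theorem fiid_five_coloring_of_T5_approximate_four_coloring
    (V : Type) [Countable V] [Infinite V]
    (G : SimpleGraph V) (hconn : G.Connected) (hacyc : G.IsAcyclic)
    (hreg : ∀ v : V, (G.neighborSet v).ncard = 5)
    (μ : Measure (V → ℝ)) [IsProbabilityMeasure μ]
    (hμ : ∀ s : Finset V,
      Measure.map (fun (x : V → ℝ) (v : s) => x v) μ
        = Measure.pi (fun _ : s => volume.restrict (Set.Icc (0:ℝ) 1)))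
    (ε : ℝ) (hε : 0 < ε) :
    ∃ f : (V → ℝ) → (V → Fin 5),
      Measurable f ∧
      (∀ (φ : G ≃g G) (x : V → ℝ) (v : V),
        f (fun u => x (φ.symm u)) v = f x (φ.symm v)) ∧
      (∀ᵐ x ∂μ, ∀ u v : V, G.Adj u v → f x u ≠ f x v) ∧
      (∀ v : V, μ {x | f x v = 4} < ENNReal.ofReal ε) := by
  have hG : G.IsTree := ⟨hconn, hacyc⟩
  have hfin : ∀ v, (G.neighborSet v).Finite := fun v => finite_of_ncard_ne_zero (by simp [hreg v])
  have : G.LocallyFinite := fun v => (hfin v).fintype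
  have hdeg : ∀ v, G.degree v ≤ 5 := fun v => by
    rw [← hreg v, ncard_eq_toFinset_card', SimpleGraph.degree, SimpleGraph.neighborFinset]
  have hnbr : ∀ v v', Nonempty (G.neighborSet v ≃ G.neighborSet v') := fun v v' =>
    Finite.card_eq.1 ((hreg v).trans (hreg v').symm)
  exact fiid_five_coloring_of_T5_approximate_four_coloring_general G hG.isBipartite hdeg
    (fun u v huv => exists_iso_apply_eq_of_isTree hG hG hnbr huv huv.symm) μ hμ ε hε
end

section
/- For every ε > 0 there exists an fiid labelling f : X → (V → Fin 4) of the 4-regular tree T_4 (where the labels 0, 1, 2 are colors and the label 3 is 'red') such that for μ-a.e. x ∈ X: for every vertex v with f(x)(v) ≠ 3 and every neighbour u of v one has f(x)(u) ≠ f(x)(v); and for every vertex v, μ({x : f(x)(v) = 3}) ≤ ε. -/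
open MeasureTheory

/-!
Call a labelling locally optimal if no modification inside a ball of radius `R` lowers the number of
red vertices. Such a labelling arises as an almost sure limit: run through all finitely described
local modifications, each one infinitely often, and carry out those that lower the number of red
vertices. By the mass transport principle every modification lowers the density of red vertices by
at least the density of the places where it happens, so by Borel–Cantelli every vertex is modified
only finitely often.

In a locally optimal labelling red vertices are far from one another in the following sense. A red
label can be moved along a geodesic by shifting the labels of the geodesic by one. At the end of the
geodesic every other label must then occur among the neighbours, as otherwise the red label could be
dropped there; as a vertex has few neighbours compared with the number of labels, some label occurs
on just one of them, and the red label can move on to that neighbour. Hence every red vertex reaches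
more than `K` vertices within distance `K`, while two red vertices reaching the same vertex could be
cancelled against each other. By mass transport again, the density of red vertices is at most
`1 / (K + 1)`.
-/

namespace RedLabelling

section Geodesics

variable {V : Type*} {G : SimpleGraph V}

lemma exists_adj_dist_add_one (hG : G.Connected) {m x : V} (hx : x ≠ m) :
    ∃ y, G.Adj x y ∧ G.dist m y + 1 = G.dist m x := by
  obtain ⟨p, hp⟩ := hG.exists_walk_length_eq_dist x m
  cases p with
  | nil => exact absurd rfl hx
  | @cons _ y _ hxy q =>
    have hq : G.dist y m ≤ q.length := SimpleGraph.dist_le q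
    have hyx : G.dist y x = 1 := SimpleGraph.dist_eq_one_iff_adj.2 hxy.symm
    have htri : G.dist m x ≤ G.dist m y + G.dist y x := hG.dist_triangle
    rw [SimpleGraph.Walk.length_cons, SimpleGraph.dist_comm] at hp
    rw [SimpleGraph.dist_comm] at hq
    exact ⟨y, hxy, by omega⟩

lemma eq_of_adj_of_dist_add_one (hG : G.IsTree) {m x y z : V} (hy : G.Adj x y) (hz : G.Adj x z)
    (hmy : G.dist m y + 1 = G.dist m x) (hmz : G.dist m z + 1 = G.dist m x) : y = z := by
  have exists_path_through : ∀ w, G.Adj x w → G.dist m w + 1 = G.dist m x →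
      ∃ p : G.Walk x m, p.IsPath ∧ p.snd = w := by
    intro w hw hmw
    obtain ⟨q, hq⟩ := hG.connected.exists_walk_length_eq_dist w m
    refine ⟨.cons hw q, SimpleGraph.Walk.isPath_of_length_eq_dist _ ?_, by simp⟩
    rw [SimpleGraph.Walk.length_cons, hq, SimpleGraph.dist_comm, hmw, SimpleGraph.dist_comm]
  obtain ⟨p, hp, rfl⟩ := exists_path_through y hy hmy
  obtain ⟨q, hq, rfl⟩ := exists_path_through z hz hmz
  rw [(hG.existsUnique_path x m).unique hp hq]

open scoped Classical in
/-- The first step of the geodesic from `x` to `m`: the neighbour of `x` that is closer to `m`.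
The junk value at `x = m` is `m` itself. -/
noncomputable def toward (G : SimpleGraph V) (m x : V) : V :=
  if h : ∃ y, G.Adj x y ∧ G.dist m y + 1 = G.dist m x then h.choose else x

@[simp]
lemma toward_self (m : V) : toward G m m = m := by
  simp [toward]

lemma adj_toward (hG : G.Connected) {m x : V} (hx : x ≠ m) : G.Adj x (toward G m x) := by
  have h := exists_adj_dist_add_one hG hx
  rw [toward, dif_pos h]
  exact h.choose_spec.1

lemma dist_toward_add_one (hG : G.Connected) {m x : V} (hx : x ≠ m) :
    G.dist m (toward G m x) + 1 = G.dist m x := by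
  have h := exists_adj_dist_add_one hG hx
  rw [toward, dif_pos h]
  exact h.choose_spec.2

lemma toward_eq (hG : G.IsTree) {m x y : V} (hxy : G.Adj x y)
    (hm : G.dist m y + 1 = G.dist m x) : toward G m x = y := by
  have hx : x ≠ m := by rintro rfl; simp at hm
  exact eq_of_adj_of_dist_add_one hG (adj_toward hG.connected hx) hxy
    (dist_toward_add_one hG.connected hx) hm

lemma toward_eq_of_adj (hG : G.IsTree) {m x : V} (h : G.Adj x m) : toward G m x = m :=
  toward_eq hG h (by rw [SimpleGraph.dist_self, SimpleGraph.dist_eq_one_iff_adj.2 h.symm])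

lemma dist_eq_add_one_of_ne_toward (hG : G.IsTree) {m x y : V} (hxy : G.Adj x y)
    (hy : y ≠ toward G m x) : G.dist m y = G.dist m x + 1 :=
  (hG.dist_eq_dist_add_one_of_adj m hxy).resolve_left
    fun h => hy (toward_eq hG hxy h.symm).symm

lemma dist_iso (hG : G.Connected) (φ : G ≃g G) (u v : V) : G.dist (φ u) (φ v) = G.dist u v := by
  have dist_le : ∀ (ψ : G ≃g G) (a b : V), G.dist (ψ a) (ψ b) ≤ G.dist a b := by
    intro ψ a b
    obtain ⟨p, hp⟩ := hG.exists_walk_length_eq_dist a b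
    rw [← hp, ← SimpleGraph.Walk.length_map ψ.toHom p]
    exact SimpleGraph.dist_le _
  refine (dist_le φ u v).antisymm ?_
  simpa using dist_le φ.symm (φ u) (φ v)

end Geodesics

section Homogeneity

variable {V : Type*} {G : SimpleGraph V}

/-- A set of vertices that contains every geodesic between two of its points. -/
def IsGeodesicallyClosed (G : SimpleGraph V) (A : Set V) : Prop :=
  ∀ ⦃a⦄, a ∈ A → ∀ ⦃b⦄, b ∈ A → toward G b a ∈ A

namespace IsGeodesicallyClosed

variable {A : Set V} {a w : V}

lemma dist_eq_add_one (hA : IsGeodesicallyClosed G A) (hG : G.IsTree) (ha : a ∈ A)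
    (haw : G.Adj a w) (hw : w ∉ A) {b : V} (hb : b ∈ A) : G.dist b w = G.dist b a + 1 :=
  dist_eq_add_one_of_ne_toward hG haw fun h => hw (h ▸ hA ha hb)

lemma insert (hA : IsGeodesicallyClosed G A) (hG : G.IsTree) (ha : a ∈ A)
    (haw : G.Adj a w) (hw : w ∉ A) : IsGeodesicallyClosed G (insert w A) := by
  rintro x (rfl | hx) y (rfl | hy)
  · simp
  · rw [toward_eq hG haw.symm (hA.dist_eq_add_one hG ha haw hw hy).symm]
    exact Or.inr ha
  · obtain rfl | hxa := eq_or_ne x a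
    · exact Or.inl (toward_eq_of_adj hG haw)
    have hdist : ∀ b ∈ A, G.dist y b = G.dist a b + 1 := fun b hb => by
      rw [SimpleGraph.dist_comm, hA.dist_eq_add_one hG ha haw hw hb, SimpleGraph.dist_comm]
    rw [toward_eq hG (adj_toward hG.connected hxa) (by
      rw [hdist _ (hA hx ha), hdist _ hx, dist_toward_add_one hG.connected hxa])]
    exact Or.inr (hA hx ha)
  · exact Or.inr (hA hx hy)

end IsGeodesicallyClosed

/-- A distance-preserving partial map between vertices of `G` with geodesically closed domain,
encoded as a relation. -/
structure IsPartialIsometry (G : SimpleGraph V) (S : SetRel V V) : Prop where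
  dist_eq : ∀ ⦃p⦄, p ∈ S → ∀ ⦃q⦄, q ∈ S → G.dist p.1 q.1 = G.dist p.2 q.2
  closed : IsGeodesicallyClosed G S.dom

namespace IsPartialIsometry

variable {S : SetRel V V}

lemma inv (hS : IsPartialIsometry G S) (hG : G.IsTree) : IsPartialIsometry G S.inv where
  dist_eq p hp q hq := (hS.dist_eq (p := p.swap) hp (q := q.swap) hq).symm
  closed := by
    rintro b ⟨a, hab⟩ b' ⟨a', hab'⟩
    obtain rfl | hne := eq_or_ne a a'
    · have hb : G.dist b b' = 0 := by simpa using (hS.dist_eq hab hab').symm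
      rw [hG.connected.dist_eq_zero_iff.1 hb, toward_self]
      exact ⟨a, hab'⟩
    obtain ⟨y, hy⟩ := hS.closed ⟨b, hab⟩ ⟨b', hab'⟩
    have hby : G.dist b y = 1 := (hS.dist_eq hab hy).symm.trans <|
      SimpleGraph.dist_eq_one_iff_adj.2 (adj_toward hG.connected hne)
    have hb'y : G.dist b' y + 1 = G.dist b' b :=
      hS.dist_eq hab' hy ▸ hS.dist_eq hab' hab ▸ dist_toward_add_one hG.connected hne
    rw [toward_eq hG (SimpleGraph.dist_eq_one_iff_adj.1 hby) hb'y]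
    exact ⟨_, hy⟩

lemma exists_adj_notMem_cod [G.LocallyFinite] (hS : IsPartialIsometry G S) (hG : G.Connected)
    {d : ℕ} (hreg : G.IsRegularOfDegree d) {a b w : V} (hab : (a, b) ∈ S) (haw : G.Adj a w)
    (hw : w ∉ S.dom) : ∃ b', G.Adj b b' ∧ b' ∉ S.cod := by
  classical
  by_contra! hcod
  choose! f hf using hcod
  have hmaps : Set.MapsTo f (G.neighborFinset b) ((G.neighborFinset a).erase w) := by
    intro y hy
    have hby : G.Adj b y := by simpa using hy
    refine Finset.mem_coe.2 <| Finset.mem_erase.2 ⟨fun h => hw ⟨y, h ▸ hf y hby⟩, ?_⟩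
    rw [SimpleGraph.mem_neighborFinset, ← SimpleGraph.dist_eq_one_iff_adj,
      hS.dist_eq hab (hf y hby), SimpleGraph.dist_eq_one_iff_adj]
    exact hby
  have hinj : Set.InjOn f (G.neighborFinset b) := by
    intro y hy z hz hyz
    rw [Finset.mem_coe, SimpleGraph.mem_neighborFinset] at hy hz
    have hdist := hS.dist_eq (hf y hy) (hf z hz)
    simp only [hyz, SimpleGraph.dist_self] at hdist
    exact hG.dist_eq_zero_iff.1 hdist.symm
  have hcard := Finset.card_le_card_of_injOn f hmaps hinj
  have hlt := Finset.card_erase_lt_of_mem ((G.mem_neighborFinset a w).2 haw)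
  rw [G.card_neighborFinset_eq_degree, hreg] at hcard hlt
  omega

lemma exists_insert [G.LocallyFinite] (hS : IsPartialIsometry G S) (hG : G.IsTree)
    {d : ℕ} (hreg : G.IsRegularOfDegree d) {a w : V} (ha : a ∈ S.dom) (haw : G.Adj a w)
    (hw : w ∉ S.dom) : ∃ b, IsPartialIsometry G (insert (w, b) S) := by
  obtain ⟨b, hab⟩ := ha
  obtain ⟨b', hbb', hb'⟩ := hS.exists_adj_notMem_cod hG.connected hreg hab haw hw
  have hdist : ∀ p ∈ S, G.dist p.1 w = G.dist p.2 b' := fun p hp => by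
    rw [hS.closed.dist_eq_add_one hG ⟨b, hab⟩ haw hw ⟨p.2, hp⟩,
      (hS.inv hG).closed.dist_eq_add_one hG ⟨a, hab⟩ hbb' hb' ⟨p.1, hp⟩, hS.dist_eq hp hab]
  refine ⟨b', ?_, ?_⟩
  · rintro p (rfl | hp) q (rfl | hq)
    · simp
    · rw [SimpleGraph.dist_comm, hdist q hq, SimpleGraph.dist_comm]
    · exact hdist p hp
    · exact hS.dist_eq hp hq
  · have hdom : SetRel.dom (insert (w, b') S) = insert w S.dom := by
      ext x
      simp [exists_or]
    exact hdom ▸ hS.closed.insert hG ⟨b, hab⟩ haw hw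

lemma sUnion {c : Set (SetRel V V)} (hc : ∀ S ∈ c, IsPartialIsometry G S)
    (hchain : IsChain (· ⊆ ·) c) : IsPartialIsometry G (⋃₀ c) := by
  have exists_common : ∀ p ∈ ⋃₀ c, ∀ q ∈ ⋃₀ c, ∃ S ∈ c, p ∈ S ∧ q ∈ S := by
    rintro p ⟨S, hS, hp⟩ q ⟨T, hT, hq⟩
    obtain h | h := hchain.total hS hT
    · exact ⟨T, hT, h hp, hq⟩
    · exact ⟨S, hS, hp, h hq⟩
  refine ⟨fun p hp q hq => ?_, ?_⟩
  · obtain ⟨S, hS, hpS, hqS⟩ := exists_common p hp q hq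
    exact (hc S hS).dist_eq hpS hqS
  · rintro a ⟨b, hab⟩ a' ⟨b', hab'⟩
    obtain ⟨S, hS, hpS, hqS⟩ := exists_common _ hab _ hab'
    obtain ⟨y, hy⟩ := (hc S hS).closed ⟨b, hpS⟩ ⟨b', hqS⟩
    exact ⟨y, S, hS, hy⟩

lemma dom_eq_univ_of_maximal [G.LocallyFinite] (hG : G.IsTree) {d : ℕ}
    (hreg : G.IsRegularOfDegree d) (hS : Maximal (IsPartialIsometry G) S) (hne : S.Nonempty) :
    S.dom = Set.univ := by
  obtain ⟨⟨u, v⟩, huv⟩ := hne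
  refine Set.eq_univ_of_forall fun x => ?_
  obtain ⟨p⟩ := hG.connected x u
  induction p with
  | nil => exact ⟨v, huv⟩
  | cons hadj _ ih =>
    by_contra hw
    obtain ⟨b, hb⟩ := hS.prop.exists_insert hG hreg (ih huv) hadj.symm hw
    exact hw ⟨b, hS.le_of_ge hb (Set.subset_insert _ _) (Set.mem_insert _ _)⟩

lemma maximal_inv (hG : G.IsTree) (hS : Maximal (IsPartialIsometry G) S) :
    Maximal (IsPartialIsometry G) S.inv :=
  ⟨hS.prop.inv hG, fun _ hT hle =>
    SetRel.inv_mono (hS.le_of_ge (hT.inv hG) (SetRel.inv_mono hle))⟩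

theorem exists_iso [G.LocallyFinite] (hS : IsPartialIsometry G S) (hG : G.IsTree) {d : ℕ}
    (hreg : G.IsRegularOfDegree d) (hne : S.Nonempty) : ∃ φ : G ≃g G, ∀ p ∈ S, φ p.1 = p.2 := by
  obtain ⟨T, hST, hT⟩ := zorn_subset_nonempty {T | IsPartialIsometry G T}
    (fun c hc hchain _ => ⟨⋃₀ c, sUnion hc hchain, fun _ => Set.subset_sUnion_of_mem⟩) S hS
  have hdom : ∀ x, ∃ y, (x, y) ∈ T := fun x =>
    Set.eq_univ_iff_forall.1 (dom_eq_univ_of_maximal hG hreg hT (hne.mono hST)) x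
  have hcod : ∀ y, ∃ x, (x, y) ∈ T := fun y =>
    Set.eq_univ_iff_forall.1 (dom_eq_univ_of_maximal hG hreg (maximal_inv hG hT)
      (let ⟨p, hp⟩ := hne; ⟨p.swap, hST hp⟩)) y
  choose φ hφ using hdom
  choose ψ hψ using hcod
  have hφ_eq : ∀ p ∈ T, φ p.1 = p.2 := fun p hp =>
    hG.connected.dist_eq_zero_iff.1 (by rw [← hT.prop.dist_eq (hφ _) hp, SimpleGraph.dist_self])
  have hψ_eq : ∀ p ∈ T, ψ p.2 = p.1 := fun p hp =>
    hG.connected.dist_eq_zero_iff.1 (by rw [hT.prop.dist_eq (hψ _) hp, SimpleGraph.dist_self])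
  refine ⟨⟨⟨φ, ψ, fun x => hψ_eq _ (hφ x), fun y => hφ_eq _ (hψ y)⟩, fun {a b} => ?_⟩,
    fun p hp => hφ_eq p (hST hp)⟩
  rw [← SimpleGraph.dist_eq_one_iff_adj, ← SimpleGraph.dist_eq_one_iff_adj]
  exact iff_of_eq (congrArg (· = 1) (hT.prop.dist_eq (hφ a) (hφ b)).symm)

end IsPartialIsometry

lemma dist_getVert_of_length_eq_dist {u v : V} {p : G.Walk u v} (hp : p.length = G.dist u v)
    {i j : ℕ} (hij : i ≤ j) (hj : j ≤ p.length) : G.dist (p.getVert i) (p.getVert j) = j - i := by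
  have hdist := SimpleGraph.length_eq_dist_of_subwalk hp
    (((p.drop i).isSubwalk_take (j - i)).trans (p.isSubwalk_drop i))
  rw [SimpleGraph.Walk.take_length, SimpleGraph.Walk.drop_length, SimpleGraph.Walk.drop_getVert,
    Nat.add_sub_cancel' hij] at hdist
  omega

lemma isPartialIsometry_reverse (hG : G.IsTree) {u v : V} {p : G.Walk u v}
    (hp : p.length = G.dist u v) : IsPartialIsometry G
      ((fun i => (p.getVert i, p.getVert (p.length - i))) '' Set.Iic p.length) where
  dist_eq := by
    rintro _ ⟨i, hi, rfl⟩ _ ⟨j, hj, rfl⟩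
    rw [Set.mem_Iic] at hi hj
    obtain hij | hji := le_total i j
    · rw [dist_getVert_of_length_eq_dist hp hij hj, SimpleGraph.dist_comm,
        dist_getVert_of_length_eq_dist hp (by omega) (by omega)]
      omega
    · rw [SimpleGraph.dist_comm, dist_getVert_of_length_eq_dist hp hji hi,
        dist_getVert_of_length_eq_dist hp (by omega) (by omega)]
      omega
  closed := by
    rintro _ ⟨_, i, hi, ⟨⟩⟩ _ ⟨_, j, hj, ⟨⟩⟩
    rw [Set.mem_Iic] at hi hj
    suffices ∃ k ≤ p.length, p.getVert k = toward G (p.getVert j) (p.getVert i) by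
      obtain ⟨k, hk, hk_eq⟩ := this
      exact ⟨_, k, hk, Prod.ext hk_eq rfl⟩
    obtain hij | rfl | hji := lt_trichotomy i j
    · refine ⟨i + 1, by omega, (toward_eq hG (p.adj_getVert_succ (by omega)) ?_).symm⟩
      rw [SimpleGraph.dist_comm, dist_getVert_of_length_eq_dist hp hij hj, SimpleGraph.dist_comm,
        dist_getVert_of_length_eq_dist hp hij.le hj]
      omega
    · exact ⟨i, hi, (toward_self _).symm⟩
    · obtain ⟨k, rfl⟩ := Nat.exists_eq_add_one.2 (Nat.zero_lt_of_lt hji)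
      refine ⟨k, by omega, (toward_eq hG (p.adj_getVert_succ hi).symm ?_).symm⟩
      rw [dist_getVert_of_length_eq_dist hp (by omega) (by omega),
        dist_getVert_of_length_eq_dist hp (by omega) hi]
      omega

theorem exists_iso_swap [G.LocallyFinite] (hG : G.IsTree) {d : ℕ} (hreg : G.IsRegularOfDegree d)
    (u v : V) : ∃ φ : G ≃g G, φ u = v ∧ φ v = u := by
  obtain ⟨p, hp⟩ := hG.connected.exists_walk_length_eq_dist u v
  obtain ⟨φ, hφ⟩ := (isPartialIsometry_reverse hG hp).exists_iso hG hreg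
    (Set.nonempty_Iic.image _)
  refine ⟨φ, ?_, ?_⟩
  · simpa using hφ _ ⟨0, Nat.zero_le _, rfl⟩
  · simpa using hφ _ ⟨p.length, Set.self_mem_Iic, rfl⟩

end Homogeneity

section Labellings

variable {V α : Type*} {G : SimpleGraph V} {red : α} {l : V → α}

/-- Adjacent vertices receive different labels, except that two adjacent vertices may both be red.
This is symmetric in the two endpoints, hence equivalent to properness at every non-red vertex. -/
def IsProper (G : SimpleGraph V) (red : α) (l : V → α) : Prop :=
  ∀ ⦃u v⦄, G.Adj u v → l u = l v → l u = red

lemma isProper_of_forall_adj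
    (h : ∀ ⦃u v⦄, G.Adj u v → ∃ l', IsProper G red l' ∧ l' u = l u ∧ l' v = l v) :
    IsProper G red l := by
  intro u v huv heq
  obtain ⟨l', hl', hu, hv⟩ := h huv
  rw [← hu]
  exact hl' huv (by rw [hu, hv, heq])

lemma IsProper.comp_iso (hl : IsProper G red l) (φ : G ≃g G) : IsProper G red (l ∘ φ) :=
  fun _ _ huv heq => hl (φ.map_adj_iff.2 huv) heq

open scoped Classical in
lemma IsProper.update (hl : IsProper G red l) {m : V} {c : α} (hc : ∀ y, G.Adj m y → l y ≠ c) :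
    IsProper G red (Function.update l m c) := by
  intro u v huv heq
  obtain rfl | hu := eq_or_ne u m
  · rw [Function.update_self, Function.update_of_ne huv.ne'] at heq
    exact absurd heq.symm (hc v huv)
  obtain rfl | hv := eq_or_ne v m
  · rw [Function.update_self, Function.update_of_ne hu] at heq
    exact absurd heq (hc u huv.symm)
  rw [Function.update_of_ne hu] at heq ⊢
  rw [Function.update_of_ne hv] at heq
  exact hl huv heq

open scoped Classical in
/-- The vertices at distance at most `r` from `v`, as a finite set. -/
noncomputable def closedBall (G : SimpleGraph V) [G.LocallyFinite] (v : V) : ℕ → Finset V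
  | 0 => {v}
  | r + 1 => (closedBall G v r).biUnion fun u => insert u (G.neighborFinset u)

variable [G.LocallyFinite]

lemma mem_closedBall (hG : G.Connected) {v u : V} {r : ℕ} :
    u ∈ closedBall G v r ↔ G.dist v u ≤ r := by
  induction r generalizing u with
  | zero => rw [closedBall, Finset.mem_singleton, Nat.le_zero, hG.dist_eq_zero_iff, eq_comm]
  | succ r ih =>
    simp only [closedBall, Finset.mem_biUnion, ih, Finset.mem_insert,
      SimpleGraph.mem_neighborFinset]
    constructor
    · rintro ⟨w, hw, rfl | hwu⟩
      · exact hw.trans (Nat.le_succ r)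
      · have htri : G.dist v u ≤ G.dist v w + G.dist w u := hG.dist_triangle
        rw [SimpleGraph.dist_eq_one_iff_adj.2 hwu] at htri
        omega
    · intro hu
      obtain rfl | hne := eq_or_ne u v
      · exact ⟨u, by rw [SimpleGraph.dist_self]; exact Nat.zero_le r, Or.inl rfl⟩
      · have hdist := dist_toward_add_one hG hne
        exact ⟨toward G v u, by omega, Or.inr (adj_toward hG hne).symm⟩

lemma mem_closedBall_self (v : V) {r : ℕ} : v ∈ closedBall G v r := by
  classical
  induction r with
  | zero => simp [closedBall]
  | succ r ih => exact Finset.mem_biUnion.2 ⟨v, ih, Finset.mem_insert_self _ _⟩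

lemma apply_mem_closedBall (hG : G.Connected) (φ : G ≃g G) {v u : V} {r : ℕ} :
    φ u ∈ closedBall G (φ v) r ↔ u ∈ closedBall G v r := by
  rw [mem_closedBall hG, mem_closedBall hG, dist_iso hG]

lemma closedBall_mono (hG : G.Connected) {v : V} {r s : ℕ} (hrs : r ≤ s) :
    closedBall G v r ⊆ closedBall G v s := fun _ hu =>
  (mem_closedBall hG).2 (((mem_closedBall hG).1 hu).trans hrs)

lemma mem_closedBall_add (hG : G.Connected) {u v w : V} {r s : ℕ} (hv : v ∈ closedBall G u r)
    (hw : w ∈ closedBall G v s) : w ∈ closedBall G u (r + s) := by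
  rw [mem_closedBall hG] at *
  exact hG.dist_triangle.trans (add_le_add hv hw)

lemma mem_closedBall_one_of_adj (hG : G.Connected) {u v : V} (huv : G.Adj u v) :
    v ∈ closedBall G u 1 :=
  (mem_closedBall hG).2 (SimpleGraph.dist_eq_one_iff_adj.2 huv).le

lemma mem_closedBall_comm (hG : G.Connected) {v u : V} {r : ℕ} :
    u ∈ closedBall G v r ↔ v ∈ closedBall G u r := by
  rw [mem_closedBall hG, mem_closedBall hG, SimpleGraph.dist_comm]

open scoped Classical in
/-- The labelling that follows `l'` on the ball of radius `R` around `v` and `l` elsewhere. -/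
noncomputable def patch (G : SimpleGraph V) [G.LocallyFinite] (R : ℕ) (v : V) (l' l : V → α) :
    V → α :=
  (closedBall G v R).piecewise l' l

lemma patch_of_mem {R : ℕ} {v u : V} {l' : V → α} (hu : u ∈ closedBall G v R) :
    patch G R v l' l u = l' u := by
  simp [patch, hu]

lemma patch_of_notMem {R : ℕ} {v u : V} {l' : V → α} (hu : u ∉ closedBall G v R) :
    patch G R v l' l u = l u := by
  simp [patch, hu]

lemma patch_congr {R : ℕ} {v : V} {l₁ l₂ : V → α} (h : ∀ u ∈ closedBall G v R, l₁ u = l₂ u) :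
    patch G R v l₁ l = patch G R v l₂ l := by
  ext u
  by_cases hu : u ∈ closedBall G v R
  · rw [patch_of_mem hu, patch_of_mem hu, h u hu]
  · rw [patch_of_notMem hu, patch_of_notMem hu]

lemma IsProper.patch (hG : G.Connected) {R : ℕ} {v : V} {l' : V → α} (hl : IsProper G red l)
    (hl' : IsProper G red l')
    (hagree : ∀ u ∈ closedBall G v (R + 1), u ∉ closedBall G v R → l' u = l u) :
    IsProper G red (patch G R v l' l) := by
  have of_mem : ∀ ⦃u w⦄, G.Adj u w → u ∈ closedBall G v R →
      RedLabelling.patch G R v l' l w = l' w := by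
    intro u w huw hu
    by_cases hw : w ∈ closedBall G v R
    · exact patch_of_mem hw
    rw [patch_of_notMem hw,
      hagree w (mem_closedBall_add hG hu (mem_closedBall_one_of_adj hG huw)) hw]
  refine isProper_of_forall_adj fun u w huw => ?_
  by_cases hu : u ∈ closedBall G v R
  · exact ⟨l', hl', (patch_of_mem hu).symm, (of_mem huw hu).symm⟩
  by_cases hw : w ∈ closedBall G v R
  · exact ⟨l', hl', (of_mem huw.symm hw).symm, (patch_of_mem hw).symm⟩
  exact ⟨l, hl, (patch_of_notMem hu).symm, (patch_of_notMem hw).symm⟩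

open scoped Classical in
/-- The red vertices of `l` in the ball of radius `R` around `v`. -/
noncomputable def redSet (G : SimpleGraph V) [G.LocallyFinite] (red : α) (R : ℕ) (v : V)
    (l : V → α) : Finset V :=
  {u ∈ closedBall G v R | l u = red}

lemma mem_redSet {R : ℕ} {v u : V} : u ∈ redSet G red R v l ↔ u ∈ closedBall G v R ∧ l u = red := by
  simp [redSet]

/-- `l'` is a proper labelling that differs from `l` only within distance `R` of `v` and has
strictly fewer red vertices there. -/
structure Improves (G : SimpleGraph V) [G.LocallyFinite] (red : α) (R : ℕ) (v : V)
    (l l' : V → α) : Prop where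
  eq_of_notMem : ∀ u ∉ closedBall G v R, l' u = l u
  isProper : IsProper G red l'
  card_redSet_lt : (redSet G red R v l').card < (redSet G red R v l).card

lemma card_redSet_comp_iso (hG : G.Connected) (φ : G ≃g G) (R : ℕ) (v : V) (l : V → α) :
    (redSet G red R v (l ∘ φ)).card = (redSet G red R (φ v) l).card := by
  refine Finset.card_nbij φ (fun u hu => ?_) φ.injective.injOn fun w hw => ?_
  · simpa [mem_redSet, apply_mem_closedBall hG] using hu
  · obtain ⟨u, rfl⟩ := φ.surjective w
    exact ⟨u, by simpa [mem_redSet, apply_mem_closedBall hG] using hw, rfl⟩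

lemma redSet_congr {R : ℕ} {v : V} {l' : V → α} (h : ∀ u ∈ closedBall G v R, l u = l' u) :
    redSet G red R v l = redSet G red R v l' := by
  ext u
  rw [mem_redSet, mem_redSet]
  exact and_congr_right fun hu => by rw [h u hu]

lemma Improves.comp_iso (hG : G.Connected) {R : ℕ} {v : V} {l' : V → α} (φ : G ≃g G)
    (h : Improves G red R (φ v) l l') : Improves G red R v (l ∘ φ) (l' ∘ φ) where
  eq_of_notMem _ hu := h.eq_of_notMem _ (mt (apply_mem_closedBall hG φ).1 hu)
  isProper := h.isProper.comp_iso φ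
  card_redSet_lt := by
    rw [card_redSet_comp_iso hG, card_redSet_comp_iso hG]
    exact h.card_redSet_lt

lemma Improves.patch (hG : G.Connected) {R : ℕ} {v : V} {l' l₂ : V → α}
    (h : Improves G red R v l l') (hl₂ : IsProper G red l₂)
    (hagree : ∀ u ∈ closedBall G v (R + 1), l₂ u = l u) :
    Improves G red R v l₂ (patch G R v l' l₂) where
  eq_of_notMem _ hu := patch_of_notMem hu
  isProper := hl₂.patch hG h.isProper fun u hu hu' => by rw [h.eq_of_notMem u hu', hagree u hu]
  card_redSet_lt := by
    rw [redSet_congr fun u hu => patch_of_mem hu,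
      redSet_congr fun u hu => hagree u (closedBall_mono hG (Nat.le_succ R) hu)]
    exact h.card_redSet_lt

/-- A proper labelling whose number of red vertices cannot be decreased by modifying it inside a
ball of radius `R`. -/
structure IsLocallyOptimal (G : SimpleGraph V) [G.LocallyFinite] (red : α) (R : ℕ)
    (l : V → α) : Prop where
  isProper : IsProper G red l
  not_improves : ∀ v l', ¬ Improves G red R v l l'

end Labellings

section Sliding

variable {V α : Type*} {G : SimpleGraph V} {red : α} {l : V → α} {m : V}

lemma toward_iso (hG : G.IsTree) (φ : G ≃g G) (m x : V) :
    toward G (φ m) (φ x) = φ (toward G m x) := by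
  obtain rfl | hx := eq_or_ne x m
  · simp
  refine toward_eq hG (φ.map_adj_iff.2 (adj_toward hG.connected hx)) ?_
  rw [dist_iso hG.connected, dist_iso hG.connected, dist_toward_add_one hG.connected hx]

/-- The vertices of the geodesic from `v` to `m`, except for `m` itself. -/
def segment (G : SimpleGraph V) (v m : V) : Set V :=
  {x | G.dist v x + G.dist x m = G.dist v m ∧ x ≠ m}

lemma segment_self (hG : G.Connected) : segment G m m = ∅ := by
  refine Set.eq_empty_of_forall_notMem fun x ⟨hx, hne⟩ => hne (hG.dist_eq_zero_iff.1 ?_)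
  rw [SimpleGraph.dist_self] at hx
  omega

lemma left_mem_segment {v : V} (hv : v ≠ m) : v ∈ segment G v m :=
  ⟨by rw [SimpleGraph.dist_self, zero_add], hv⟩

lemma toward_mem_segment (hG : G.IsTree) {v : V} (hm : m ≠ v) : toward G v m ∈ segment G v m := by
  have hadj := adj_toward hG.connected hm
  refine ⟨?_, hadj.ne'⟩
  rw [SimpleGraph.dist_eq_one_iff_adj.2 hadj.symm, dist_toward_add_one hG.connected hm]

lemma segment_of_adj (hG : G.IsTree) {v w : V} (hmw : G.Adj m w)
    (hw : G.dist v w = G.dist v m + 1) : segment G v w = insert m (segment G v m) := by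
  have hmw_dist : G.dist m w = 1 := SimpleGraph.dist_eq_one_iff_adj.2 hmw
  ext x
  have hvxw : G.dist v w ≤ G.dist v x + G.dist x w := hG.connected.dist_triangle
  constructor
  · rintro ⟨hx, hxw⟩
    have hy_dist := dist_toward_add_one hG.connected hxw.symm
    have hy_adj := adj_toward hG.connected hxw.symm
    set y := toward G x w
    have hyw : G.dist y w = 1 := SimpleGraph.dist_eq_one_iff_adj.2 hy_adj.symm
    have hvy : G.dist v y ≤ G.dist v x + G.dist x y := hG.connected.dist_triangle
    have hvw : G.dist v w ≤ G.dist v y + G.dist y w := hG.connected.dist_triangle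
    have hym : y = m := eq_of_adj_of_dist_add_one hG hy_adj hmw.symm (by omega) hw.symm
    obtain rfl | hxm := eq_or_ne x m
    · exact Or.inl rfl
    · exact Or.inr ⟨by rw [hym] at hy_dist; omega, hxm⟩
  · have hxw : G.dist x w ≤ G.dist x m + G.dist m w := hG.connected.dist_triangle
    rintro (rfl | ⟨hx, -⟩)
    · exact ⟨by omega, hmw.ne⟩
    · exact ⟨by omega, by rintro rfl; omega⟩

lemma segment_iso (hG : G.Connected) (φ : G ≃g G) {v x : V} :
    φ x ∈ segment G (φ v) (φ m) ↔ x ∈ segment G v m := by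
  simp only [segment, Set.mem_ofPred_eq, dist_iso hG, φ.injective.ne_iff]

/-- Letting every vertex of `D` take over the label of its neighbour towards `m` moves no red label
onto `D` and creates no conflict along the boundary of `D`, apart from `m`, which will turn red. -/
structure IsSlidable (G : SimpleGraph V) (red : α) (l : V → α) (m : V) (D : Set V) : Prop where
  notMem : m ∉ D
  ne_red : ∀ x ∈ D, l (toward G m x) ≠ red
  ne_of_adj : ∀ x ∈ D, ∀ y, G.Adj x y → y ∉ D → y ≠ m → l y ≠ l (toward G m x)

open scoped Classical in
/-- Every vertex of `D` takes over the label of its neighbour towards `m`, and `m` turns red. -/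
noncomputable def slide (G : SimpleGraph V) (red : α) (l : V → α) (m : V) (D : Set V) : V → α :=
  D.piecewise (l ∘ toward G m) (Function.update l m red)

variable {D : Set V}

lemma slide_of_mem {x : V} (hx : x ∈ D) : slide G red l m D x = l (toward G m x) := by
  simp [slide, hx]

lemma slide_self (hm : m ∉ D) : slide G red l m D m = red := by
  simp [slide, hm]

lemma slide_of_notMem {x : V} (hx : x ∉ D) (hxm : x ≠ m) : slide G red l m D x = l x := by
  simp [slide, hx, hxm]

namespace IsSlidable

lemma union (h : IsSlidable G red l m D) {D' : Set V} (h' : IsSlidable G red l m D') :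
    IsSlidable G red l m (D ∪ D') where
  notMem := not_or.2 ⟨h.notMem, h'.notMem⟩
  ne_red x hx := hx.elim (h.ne_red x) (h'.ne_red x)
  ne_of_adj x hx y hxy hy hym := hx.elim
    (fun hx => h.ne_of_adj x hx y hxy (fun hyD => hy (Or.inl hyD)) hym)
    (fun hx => h'.ne_of_adj x hx y hxy (fun hyD => hy (Or.inr hyD)) hym)

lemma slide_eq_red_of_eq_slide_toward (h : IsSlidable G red l m D) (hG : G.IsTree)
    (hl : IsProper G red l) {u : V} (hum : u ≠ m)
    (heq : slide G red l m D u = slide G red l m D (toward G m u)) :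
    slide G red l m D u = red := by
  have hadj := adj_toward hG.connected hum
  set w := toward G m u
  by_cases hu : u ∈ D
  · rw [slide_of_mem hu] at heq
    refine absurd heq ?_
    by_cases hwD : w ∈ D
    · rw [slide_of_mem hwD]
      have hwm : w ≠ m := fun h' => h.notMem (h' ▸ hwD)
      exact fun heq' => h.ne_red u hu (hl (adj_toward hG.connected hwm) heq')
    obtain hwm | hwm := eq_or_ne w m
    · exact fun heq' => h.ne_red u hu (heq'.trans (by rw [hwm, slide_self h.notMem]))
    · exact absurd rfl (h.ne_of_adj u hu w hadj hwD hwm)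
  · rw [slide_of_notMem hu hum] at heq ⊢
    by_cases hwD : w ∈ D
    · rw [slide_of_mem hwD] at heq
      exact absurd heq (h.ne_of_adj w hwD u hadj.symm hu hum)
    obtain hwm | hwm := eq_or_ne w m
    · rwa [hwm, slide_self h.notMem] at heq
    · rw [slide_of_notMem hwD hwm] at heq
      exact hl hadj heq

lemma isProper_slide (h : IsSlidable G red l m D) (hG : G.IsTree) (hl : IsProper G red l) :
    IsProper G red (slide G red l m D) := by
  intro u w huw heq
  by_cases huw' : w = toward G m u
  · obtain rfl | hum := eq_or_ne u m
    · exact slide_self h.notMem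
    · exact h.slide_eq_red_of_eq_slide_toward hG hl hum (huw' ▸ heq)
  · have hdist := dist_eq_add_one_of_ne_toward hG huw huw'
    have hwm : w ≠ m := by rintro rfl; simp at hdist
    rw [heq]
    refine h.slide_eq_red_of_eq_slide_toward hG hl hwm ?_
    rw [toward_eq hG huw.symm hdist.symm, heq]

lemma eq_red_of_slide_eq_red (h : IsSlidable G red l m D) {u : V}
    (hu : slide G red l m D u = red) (hum : u ≠ m) : u ∉ D ∧ l u = red := by
  have huD : u ∉ D := fun huD => h.ne_red u huD ((slide_of_mem huD).symm.trans hu)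
  exact ⟨huD, (slide_of_notMem huD hum).symm.trans hu⟩

end IsSlidable

end Sliding

section Merging

variable {V α : Type*} {G : SimpleGraph V} {red : α} {l : V → α} {R : ℕ}

lemma exists_label_of_card_le [Fintype α] {N : Finset V} (hN : N.card + 4 ≤ 2 * Fintype.card α)
    (h : V → α) (red e : α) (hsurj : ∀ c ≠ red, ∃ y ∈ N, h y = c) :
    ∃ w ∈ N, h w ≠ red ∧ h w ≠ e ∧ ∀ y ∈ N, h y = h w → y = w := by
  classical
  by_contra! hrep
  have two_le : ∀ c ∈ Finset.univ.erase red,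
      2 ≤ (N.filter (h · = c)).card + if c = e then 1 else 0 := by
    intro c hc
    obtain ⟨w, hw, rfl⟩ := hsurj c (Finset.ne_of_mem_erase hc)
    have hw_mem : w ∈ N.filter (h · = h w) := Finset.mem_filter.2 ⟨hw, rfl⟩
    obtain he | he := eq_or_ne (h w) e
    · rw [if_pos he]
      have := Finset.card_pos.2 ⟨w, hw_mem⟩
      omega
    · obtain ⟨y, hy, hyw, hne⟩ := hrep w hw (Finset.ne_of_mem_erase hc) he
      exact (Finset.one_lt_card.2 ⟨y, Finset.mem_filter.2 ⟨hy, hyw⟩, w, hw_mem, hne⟩).trans_le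
        (Nat.le_add_right _ _)
  have hcard : (Finset.univ.erase red).card * 2 ≤ N.card + 1 := by
    calc (Finset.univ.erase red).card * 2
        ≤ ∑ c ∈ Finset.univ.erase red, ((N.filter (h · = c)).card + if c = e then 1 else 0) :=
          Finset.card_nsmul_le_sum _ _ _ two_le
      _ ≤ ∑ c, ((N.filter (h · = c)).card + if c = e then 1 else 0) :=
          Finset.sum_le_sum_of_subset (Finset.erase_subset _ _)
      _ = N.card + 1 := by
          rw [Finset.sum_add_distrib, Finset.sum_ite_eq' Finset.univ e, if_pos (Finset.mem_univ e),
            Finset.card_eq_sum_card_fiberwise (f := h) (t := Finset.univ) (by simp)]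
  rw [Finset.card_erase_of_mem (Finset.mem_univ red), Finset.card_univ] at hcard
  omega

/-- The vertex `v` is red, and its red label can be moved to `m` by sliding along the geodesic. -/
structure Slides (G : SimpleGraph V) (red : α) (l : V → α) (v m : V) : Prop where
  eq_red : l v = red
  isSlidable : IsSlidable G red l m (segment G v m)

lemma slides_self (hG : G.Connected) {v : V} (hv : l v = red) : Slides G red l v v where
  eq_red := hv
  isSlidable := by constructor <;> simp [segment_self hG]

lemma IsSlidable.comp_iso (hG : G.IsTree) (φ : G ≃g G) {v m : V}
    (h : IsSlidable G red l (φ m) (segment G (φ v) (φ m))) :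
    IsSlidable G red (l ∘ φ) m (segment G v m) where
  notMem hm := h.notMem ((segment_iso hG.connected φ).2 hm)
  ne_red x hx := by
    rw [Function.comp_apply, ← toward_iso hG]
    exact h.ne_red _ ((segment_iso hG.connected φ).2 hx)
  ne_of_adj x hx y hxy hy hym := by
    rw [Function.comp_apply, Function.comp_apply, ← toward_iso hG]
    exact h.ne_of_adj _ ((segment_iso hG.connected φ).2 hx) _ (φ.map_adj_iff.2 hxy)
      (mt (segment_iso hG.connected φ).1 hy) (φ.injective.ne hym)

lemma Slides.comp_iso (hG : G.IsTree) (φ : G ≃g G) {v m : V}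
    (h : Slides G red l (φ v) (φ m)) : Slides G red (l ∘ φ) v m :=
  ⟨h.eq_red, h.isSlidable.comp_iso hG φ⟩

lemma toward_eq_toward_of_mem_segment (hG : G.IsTree) {v m w x : V} (hx : x ∈ segment G v m)
    (hmw : G.Adj m w) (hw : G.dist v w = G.dist v m + 1) : toward G w x = toward G m x := by
  have hadj := adj_toward hG.connected hx.2
  have hdist := dist_toward_add_one hG.connected hx.2
  set z := toward G m x
  have hxw : G.dist v x + G.dist x w = G.dist v w :=
    (segment_of_adj hG hmw hw ▸ Or.inr hx : x ∈ segment G v w).1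
  have hwz : G.dist w z ≤ G.dist w m + G.dist m z := hG.connected.dist_triangle
  have hwx : G.dist w x ≤ G.dist w z + G.dist z x := hG.connected.dist_triangle
  rw [SimpleGraph.dist_eq_one_iff_adj.2 hmw.symm] at hwz
  rw [SimpleGraph.dist_eq_one_iff_adj.2 hadj.symm] at hwx
  refine toward_eq hG hadj ?_
  have hsum := hx.1
  rw [SimpleGraph.dist_comm] at hxw hsum
  rw [SimpleGraph.dist_comm (u := x) (v := w)] at hxw
  rw [SimpleGraph.dist_comm (u := x) (v := m)] at hsum
  omega

lemma Slides.of_adj (hG : G.IsTree) {v m w : V} (h : Slides G red l v m) (hmw : G.Adj m w)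
    (hw : G.dist v w = G.dist v m + 1) (hw_red : l w ≠ red)
    (hw_uniq : ∀ y, G.Adj m y → y ∉ segment G v m → y ≠ w → l y ≠ l w) :
    Slides G red l v w where
  eq_red := h.eq_red
  isSlidable := by
    rw [segment_of_adj hG hmw hw]
    refine ⟨?_, ?_, ?_⟩
    · rw [← segment_of_adj hG hmw hw]
      exact fun h => h.2 rfl
    · rintro x (rfl | hx)
      · rwa [toward_eq_of_adj hG hmw]
      · rw [toward_eq_toward_of_mem_segment hG hx hmw hw]
        exact h.isSlidable.ne_red x hx
    · rintro x (rfl | hx) y hxy hy hyw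
      · rw [toward_eq_of_adj hG hmw]
        exact hw_uniq y hxy (fun hyD => hy (Or.inr hyD)) hyw
      · rw [toward_eq_toward_of_mem_segment hG hx hmw hw]
        exact h.isSlidable.ne_of_adj x hx y hxy (fun hyD => hy (Or.inr hyD)) fun hym =>
          hy (Or.inl hym)

variable [G.LocallyFinite]

lemma IsLocallyOptimal.exists_slide_eq (hopt : IsLocallyOptimal G red R l) (hG : G.IsTree)
    {v m : V} (hslides : Slides G red l v m) (hm : G.dist v m ≤ R) {c : α} (hc : c ≠ red) :
    ∃ y, G.Adj m y ∧ slide G red l m (segment G v m) y = c := by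
  classical
  by_contra! hmissing
  set l' := Function.update (slide G red l m (segment G v m)) m c with hl'
  refine hopt.not_improves v l' ⟨fun u hu => ?_, ?_, Finset.card_lt_card ?_⟩
  · rw [mem_closedBall hG.connected] at hu
    have hum : u ≠ m := by rintro rfl; exact hu hm
    rw [hl', Function.update_of_ne hum, slide_of_notMem (fun h => hu ?_) hum]
    exact (Nat.le_of_add_right_le h.1.le).trans hm
  · exact (hslides.isSlidable.isProper_slide hG hopt.isProper).update hmissing
  have eq_red : ∀ u, l' u = red → u ≠ m ∧ u ∉ segment G v m ∧ l u = red := by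
    intro u hu
    obtain rfl | hum := eq_or_ne u m
    · exact absurd (by simpa [hl'] using hu) hc
    · rw [hl', Function.update_of_ne hum] at hu
      exact ⟨hum, hslides.isSlidable.eq_red_of_slide_eq_red hu hum⟩
  refine Finset.ssubset_iff_of_subset (fun u hu => ?_) |>.2 ⟨v, ?_, fun hv => ?_⟩
  · rw [mem_redSet] at hu ⊢
    exact ⟨hu.1, (eq_red u hu.2).2.2⟩
  · exact mem_redSet.2 ⟨mem_closedBall_self _, hslides.eq_red⟩
  · obtain ⟨hvm, hvD, -⟩ := eq_red v (mem_redSet.1 hv).2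
    exact hvD (left_mem_segment hvm)

lemma IsLocallyOptimal.exists_slides_adj [Fintype α] (hopt : IsLocallyOptimal G red R l)
    (hG : G.IsTree) {d : ℕ} (hreg : G.IsRegularOfDegree d) (hα : d + 4 ≤ 2 * Fintype.card α)
    {v m : V} (hslides : Slides G red l v m) (hm : G.dist v m ≤ R) :
    ∃ w, G.dist v w = G.dist v m + 1 ∧ Slides G red l v w := by
  set D := segment G v m
  set l' := slide G red l m D
  have hN : (G.neighborFinset m).card + 4 ≤ 2 * Fintype.card α := by
    rwa [G.card_neighborFinset_eq_degree, hreg]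
  obtain ⟨w, hmw, hw_red, hw_ne, hw_uniq⟩ := exists_label_of_card_le hN l' red (l m) fun c hc => by
    simpa using hopt.exists_slide_eq hG hslides hm hc
  simp only [SimpleGraph.mem_neighborFinset] at hmw hw_uniq
  have hwD : w ∉ D := fun hwD => hw_ne <| by
    rw [← toward_eq_of_adj hG hmw.symm]
    exact slide_of_mem hwD
  have hlw : l' w = l w := slide_of_notMem hwD hmw.ne'
  have hw : G.dist v w = G.dist v m + 1 := dist_eq_add_one_of_ne_toward hG hmw fun h => by
    obtain rfl | hmv := eq_or_ne m v
    · rw [toward_self] at h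
      exact hmw.ne' h
    · exact hwD (h ▸ toward_mem_segment hG hmv)
  refine ⟨w, hw, hslides.of_adj hG hmw hw (hlw ▸ hw_red) fun y hmy hyD hyw heq => hyw ?_⟩
  refine hw_uniq y hmy ?_
  rw [hlw, ← heq]
  exact slide_of_notMem hyD hmy.ne'

lemma IsLocallyOptimal.exists_slides_dist_eq [Fintype α] (hopt : IsLocallyOptimal G red R l)
    (hG : G.IsTree) {d : ℕ} (hreg : G.IsRegularOfDegree d) (hα : d + 4 ≤ 2 * Fintype.card α)
    {v : V} (hv : l v = red) {k : ℕ} (hk : k ≤ R) :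
    ∃ w, G.dist v w = k ∧ Slides G red l v w := by
  induction k with
  | zero => exact ⟨v, SimpleGraph.dist_self, slides_self hG.connected hv⟩
  | succ k ih =>
    obtain ⟨m, rfl, hm⟩ := ih (by omega)
    exact hopt.exists_slides_adj hG hreg hα hm (by omega)

lemma IsSlidable.card_redSet_slide_lt {D : Set V} {m v v₁ v₂ : V} (h : IsSlidable G red l m D)
    (hne : v₁ ≠ v₂) (hv₁ : v₁ ∈ redSet G red R v l) (hv₂ : v₂ ∈ redSet G red R v l)
    (hD₁ : v₁ ≠ m → v₁ ∈ D) (hD₂ : v₂ ≠ m → v₂ ∈ D) :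
    (redSet G red R v (slide G red l m D)).card < (redSet G red R v l).card := by
  classical
  set S := redSet G red R v l
  have hsub : redSet G red R v (slide G red l m D) ⊆ insert m ((S.erase v₁).erase v₂) := by
    intro u hu
    obtain ⟨hu_ball, hu_red⟩ := mem_redSet.1 hu
    obtain rfl | hum := eq_or_ne u m
    · exact Finset.mem_insert_self _ _
    obtain ⟨huD, hlu⟩ := h.eq_red_of_slide_eq_red hu_red hum
    simp only [Finset.mem_insert, Finset.mem_erase]
    exact Or.inr ⟨fun hu₂ => huD (hu₂ ▸ hD₂ (hu₂ ▸ hum)), fun hu₁ => huD (hu₁ ▸ hD₁ (hu₁ ▸ hum)),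
      mem_redSet.2 ⟨hu_ball, hlu⟩⟩
  have hcard := (Finset.card_le_card hsub).trans (Finset.card_insert_le _ _)
  have hlt₁ := Finset.card_erase_lt_of_mem hv₁
  have hlt₂ := Finset.card_erase_lt_of_mem (Finset.mem_erase.2 ⟨hne.symm, hv₂⟩)
  omega

lemma IsLocallyOptimal.eq_of_slides (hopt : IsLocallyOptimal G red R l) (hG : G.IsTree)
    {v₁ v₂ m : V} (h₁ : Slides G red l v₁ m) (h₂ : Slides G red l v₂ m)
    (hR : G.dist v₁ m + G.dist v₂ m ≤ R) : v₁ = v₂ := by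
  by_contra hne
  have hD := h₁.isSlidable.union h₂.isSlidable
  set D := segment G v₁ m ∪ segment G v₂ m
  have hD₁ : v₁ ≠ m → v₁ ∈ D := fun h => Or.inl (left_mem_segment h)
  have hD₂ : v₂ ≠ m → v₂ ∈ D := fun h => Or.inr (left_mem_segment h)
  have hm_ball : m ∈ closedBall G v₁ R := (mem_closedBall hG.connected).2 (by omega)
  have hD_ball : ∀ u ∈ D, u ∈ closedBall G v₁ R := by
    intro u hu
    rw [mem_closedBall hG.connected]
    obtain ⟨hu, -⟩ | ⟨hu, -⟩ := hu
    · omega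
    · have htri : G.dist v₁ u ≤ G.dist v₁ m + G.dist m u := hG.connected.dist_triangle
      rw [SimpleGraph.dist_comm (u := m)] at htri
      omega
  have hv₂_ball : v₂ ∈ closedBall G v₁ R := by
    obtain rfl | h := eq_or_ne v₂ m
    · exact hm_ball
    · exact hD_ball v₂ (hD₂ h)
  refine hopt.not_improves v₁ (slide G red l m D)
    ⟨fun u hu => ?_, hD.isProper_slide hG hopt.isProper, ?_⟩
  · exact slide_of_notMem (fun huD => hu (hD_ball u huD)) (by rintro rfl; exact hu hm_ball)
  · exact hD.card_redSet_slide_lt hne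
      (mem_redSet.2 ⟨mem_closedBall_self _, h₁.eq_red⟩)
      (mem_redSet.2 ⟨hv₂_ball, h₂.eq_red⟩) hD₁ hD₂

open scoped Classical in
lemma IsLocallyOptimal.lt_card_slides_from [Fintype α] {K : ℕ}
    (hopt : IsLocallyOptimal G red (2 * K) l) (hG : G.IsTree) {d : ℕ}
    (hreg : G.IsRegularOfDegree d) (hα : d + 4 ≤ 2 * Fintype.card α) {v : V} (hv : l v = red) :
    K < Finset.card {w ∈ closedBall G v K | Slides G red l v w} := by
  have hdist : ∀ k ∈ Finset.range (K + 1), ∃ w, G.dist v w = k ∧ Slides G red l v w := fun k hk =>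
    hopt.exists_slides_dist_eq hG hreg hα hv (by rw [Finset.mem_range] at hk; omega)
  have : Nonempty V := ⟨v⟩
  choose! w hw hslides using hdist
  rw [← Nat.add_one_le_iff, ← Finset.card_range (K + 1)]
  refine Finset.card_le_card_of_injOn w (fun k hk => ?_) fun j hj k hk hjk => ?_
  · refine Finset.mem_coe.2 (Finset.mem_filter.2 ⟨(mem_closedBall hG.connected).2 ?_, hslides k hk⟩)
    rw [hw k hk]
    exact Finset.mem_range_succ_iff.1 hk
  · rw [← hw j hj, ← hw k hk, hjk]

open scoped Classical in
lemma IsLocallyOptimal.card_slides_to_le_one {K : ℕ} (hopt : IsLocallyOptimal G red (2 * K) l)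
    (hG : G.IsTree) (m : V) :
    Finset.card {v ∈ closedBall G m K | Slides G red l v m} ≤ 1 := by
  refine Finset.card_le_one.2 fun v₁ h₁ v₂ h₂ => ?_
  rw [Finset.mem_filter, mem_closedBall hG.connected, SimpleGraph.dist_comm] at h₁ h₂
  exact hopt.eq_of_slides hG h₁.2 h₂.2 (by omega)

end Merging

section Procedure

variable {V Ω α : Type*} [MeasurableSpace Ω] [MeasurableSpace.CountablyGenerated Ω]

/-- The first `n` binary digits of a seed. -/
noncomputable def tag (n : ℕ) (ω : Ω) : Fin n → Bool := fun i => MeasurableSpace.mapNatBool Ω ω i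

lemma exists_injOn_tag [MeasurableSpace.SeparatesPoints Ω] {x : V → Ω} (hx : Function.Injective x)
    (S : Finset V) : ∃ n, Set.InjOn (tag n ∘ x) S := by
  have hpair : ∀ u ∈ S, ∀ w ∈ S, ∀ᶠ n in Filter.atTop,
      tag n (x u) = tag n (x w) → u = w := by
    intro u _ w _
    obtain rfl | hne := eq_or_ne u w
    · simp
    obtain ⟨k, hk⟩ := Function.ne_iff.1
      ((MeasurableSpace.injective_mapNatBool Ω).ne (hx.ne hne))
    filter_upwards [Filter.eventually_gt_atTop k] with n hn heq
    exact absurd (congrFun heq ⟨k, hn⟩) hk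
  simp only [← Filter.eventually_all_finset] at hpair
  obtain ⟨n, hn⟩ := hpair.exists
  exact ⟨n, fun u hu w hw => hn u hu w hw⟩

/-- An instruction that is local and uses finitely many digits of the seeds: near each vertex tagged
`centerTag`, replace the label of every vertex tagged `c` by `recolor c`. -/
structure Rule (α : Type*) where
  depth : ℕ
  centerTag : Fin depth → Bool
  recolor : (Fin depth → Bool) → α

instance [Finite α] : Countable (Rule α) :=
  Function.Injective.countable
    (f := fun q : Rule α => (⟨q.depth, q.centerTag, q.recolor⟩ :
      Σ n, (Fin n → Bool) × ((Fin n → Bool) → α))) <| by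
    rintro ⟨⟩ ⟨⟩ h
    cases h
    rfl

/-- The labelling that the rule `q` prescribes for the seeds `x`. -/
noncomputable def Rule.target (q : Rule α) (x : V → Ω) : V → α := fun u =>
  q.recolor (tag q.depth (x u))

variable {G : SimpleGraph V} [G.LocallyFinite] {red : α} {R : ℕ} {q : Rule α} {x : V → Ω}
  {l : V → α}

/-- The rule `q` applies around `v`: the vertices near `v` have distinct tags, so that it acts
around at most one of them, and it improves the labelling `l` there. -/
structure IsCenter (G : SimpleGraph V) [G.LocallyFinite] (red : α) (R : ℕ) (q : Rule α)
    (x : V → Ω) (l : V → α) (v : V) : Prop where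
  tag_eq : tag q.depth (x v) = q.centerTag
  injOn : Set.InjOn (tag q.depth ∘ x) (closedBall G v (2 * R + 1))
  improves : Improves G red R v l (patch G R v (q.target x) l)

lemma IsCenter.eq {v w : V} (hv : IsCenter G red R q x l v) (hw : IsCenter G red R q x l w)
    (hvw : w ∈ closedBall G v (2 * R + 1)) : v = w :=
  hv.injOn (mem_closedBall_self v) hvw (hv.tag_eq.trans hw.tag_eq.symm)

lemma Improves.exists_rule_isCenter [MeasurableSpace.SeparatesPoints Ω] (hG : G.Connected)
    (hx : Function.Injective x) {v : V} {l' : V → α} (h : Improves G red R v l l') :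
    ∃ q : Rule α, ∀ l₂, IsProper G red l₂ → (∀ u ∈ closedBall G v (R + 1), l₂ u = l u) →
      IsCenter G red R q x l₂ v := by
  have : Nonempty V := ⟨v⟩
  obtain ⟨n, hn⟩ := exists_injOn_tag hx (closedBall G v (2 * R + 1))
  let q : Rule α :=
    ⟨n, tag n (x v), l' ∘ Function.invFunOn (tag n ∘ x) (closedBall G v (2 * R + 1))⟩
  have hq : ∀ u ∈ closedBall G v R, q.target x u = l' u := fun u hu =>
    congrArg l' (hn.leftInvOn_invFunOn (closedBall_mono hG (by omega) hu))
  refine ⟨q, fun l₂ hl₂ hagree => ⟨rfl, hn, ?_⟩⟩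
  rw [patch_congr hq]
  exact h.patch hG hl₂ hagree

open scoped Classical in
/-- One round of the procedure: follow the rule `q` around all of its centres. -/
noncomputable def step (G : SimpleGraph V) [G.LocallyFinite] (red : α) (R : ℕ) (q : Rule α)
    (x : V → Ω) (l : V → α) : V → α := fun u =>
  if ∃ v ∈ closedBall G u R, IsCenter G red R q x l v then q.target x u else l u

lemma step_of_forall_not_isCenter {u : V}
    (hu : ∀ v ∈ closedBall G u R, ¬ IsCenter G red R q x l v) : step G red R q x l u = l u :=
  if_neg fun ⟨v, hv, hcenter⟩ => hu v hv hcenter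

lemma IsCenter.step_eq_patch (hG : G.Connected) {v u : V} (hv : IsCenter G red R q x l v)
    (hu : u ∈ closedBall G v (R + 1)) :
    step G red R q x l u = patch G R v (q.target x) l u := by
  by_cases huR : u ∈ closedBall G v R
  · rw [patch_of_mem huR]
    exact if_pos ⟨v, (mem_closedBall_comm hG).1 huR, hv⟩
  · rw [patch_of_notMem huR]
    refine step_of_forall_not_isCenter fun w hw hcenter => huR ?_
    have hvw := mem_closedBall_add hG hu hw
    rw [show R + 1 + R = 2 * R + 1 by omega] at hvw
    rw [hv.eq hcenter hvw]
    exact (mem_closedBall_comm hG).1 hw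

lemma IsCenter.card_redSet_step_lt (hG : G.Connected) {v : V} (hv : IsCenter G red R q x l v) :
    (redSet G red R v (step G red R q x l)).card < (redSet G red R v l).card := by
  rw [redSet_congr fun u hu => hv.step_eq_patch hG (closedBall_mono hG (Nat.le_succ R) hu)]
  exact hv.improves.card_redSet_lt

lemma isProper_step (hG : G.Connected) (hl : IsProper G red l) :
    IsProper G red (step G red R q x l) := by
  have exists_patch : ∀ u w, G.Adj u w → (∃ v ∈ closedBall G u R, IsCenter G red R q x l v) →
      ∃ l', IsProper G red l' ∧ l' u = step G red R q x l u ∧ l' w = step G red R q x l w := by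
    rintro u w huw ⟨v, hv, hcenter⟩
    rw [mem_closedBall_comm hG] at hv
    exact ⟨_, hcenter.improves.isProper,
      (hcenter.step_eq_patch hG (closedBall_mono hG (Nat.le_succ R) hv)).symm,
      (hcenter.step_eq_patch hG
        (mem_closedBall_add hG hv (mem_closedBall_one_of_adj hG huw))).symm⟩
  refine isProper_of_forall_adj fun u w huw => ?_
  by_cases hu : ∃ v ∈ closedBall G u R, IsCenter G red R q x l v
  · exact exists_patch u w huw hu
  by_cases hw : ∃ v ∈ closedBall G w R, IsCenter G red R q x l v
  · obtain ⟨l', hl', hl'w, hl'u⟩ := exists_patch w u huw.symm hw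
    exact ⟨l', hl', hl'u, hl'w⟩
  · exact ⟨l, hl, (if_neg hu).symm, (if_neg hw).symm⟩

lemma patch_comp_iso (hG : G.Connected) (φ : G ≃g G) (v : V) (l' l : V → α) :
    patch G R v (l' ∘ φ) (l ∘ φ) = patch G R (φ v) l' l ∘ φ := by
  ext u
  by_cases hu : u ∈ closedBall G v R
  · rw [patch_of_mem hu, Function.comp_apply, Function.comp_apply,
      patch_of_mem ((apply_mem_closedBall hG φ).2 hu)]
  · rw [patch_of_notMem hu, Function.comp_apply, Function.comp_apply,
      patch_of_notMem (mt (apply_mem_closedBall hG φ).1 hu)]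

lemma IsCenter.comp_iso (hG : G.Connected) (φ : G ≃g G) {v : V}
    (h : IsCenter G red R q x l (φ v)) : IsCenter G red R q (x ∘ φ) (l ∘ φ) v where
  tag_eq := h.tag_eq
  injOn u hu w hw huw := φ.injective <|
    h.injOn ((apply_mem_closedBall hG φ).2 hu) ((apply_mem_closedBall hG φ).2 hw) huw
  improves := by
    have := h.improves.comp_iso hG φ
    rwa [← patch_comp_iso hG] at this

lemma isCenter_comp_iso (hG : G.Connected) (φ : G ≃g G) {v : V} :
    IsCenter G red R q (x ∘ φ) (l ∘ φ) v ↔ IsCenter G red R q x l (φ v) := by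
  refine ⟨fun h => ?_, IsCenter.comp_iso hG φ⟩
  have := IsCenter.comp_iso hG φ.symm (v := φ v) (by rwa [φ.symm_apply_apply])
  simpa [Function.comp_assoc] using this

lemma step_comp_iso (hG : G.Connected) (φ : G ≃g G) :
    step G red R q (x ∘ φ) (l ∘ φ) = step G red R q x l ∘ φ := by
  classical
  ext u
  have hcenter : (∃ v ∈ closedBall G u R, IsCenter G red R q (x ∘ φ) (l ∘ φ) v) ↔
      ∃ v ∈ closedBall G (φ u) R, IsCenter G red R q x l v := by
    conv_rhs => rw [φ.surjective.exists]
    simp only [isCenter_comp_iso hG, apply_mem_closedBall hG]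
  exact if_congr hcenter rfl rfl

end Procedure

section EventualValue

variable {α : Type*}

open scoped Classical in
/-- The value at which the sequence `a` stabilizes, or `a₀` if it does not stabilize. -/
noncomputable def eventualValue (a₀ : α) (a : ℕ → α) : α :=
  if h : ∃ c, ∀ᶠ i in Filter.atTop, a i = c then h.choose else a₀

lemma eventualValue_eq {a₀ c : α} {a : ℕ → α} (h : ∀ᶠ i in Filter.atTop, a i = c) :
    eventualValue a₀ a = c := by
  have hex : ∃ c, ∀ᶠ i in Filter.atTop, a i = c := ⟨c, h⟩
  rw [eventualValue, dif_pos hex]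
  obtain ⟨i, hi, hi'⟩ := (hex.choose_spec.and h).exists
  exact hi.symm.trans hi'

lemma eventually_eq_eventualValue {a₀ : α} {a : ℕ → α}
    (h : ∀ᶠ i in Filter.atTop, a (i + 1) = a i) :
    ∀ᶠ i in Filter.atTop, a i = eventualValue a₀ a := by
  obtain ⟨N, hN⟩ := Filter.eventually_atTop.1 h
  have hconst : ∀ᶠ i in Filter.atTop, a i = a N := by
    filter_upwards [Filter.eventually_ge_atTop N] with i hi
    induction i, hi using Nat.le_induction with
    | base => rfl
    | succ i hi ih => rw [hN i hi, ih]
  rwa [eventualValue_eq hconst]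

lemma measurable_eventualValue [MeasurableSpace α] [DiscreteMeasurableSpace α] [Countable α]
    (a₀ : α) : Measurable (eventualValue a₀) := by
  refine measurable_to_countable' fun c => measurableSet_setOfPred.2 ?_
  have hiff : ∀ a : ℕ → α, eventualValue a₀ a = c ↔
      (∃ N, ∀ i, N ≤ i → a i = c) ∨ (a₀ = c ∧ ∀ c', ¬ ∃ N, ∀ i, N ≤ i → a i = c') := by
    intro a
    simp only [← Filter.eventually_atTop]
    by_cases h : ∃ c', ∀ᶠ i in Filter.atTop, a i = c'
    · obtain ⟨c', hc'⟩ := h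
      rw [eventualValue_eq hc']
      refine ⟨fun h => Or.inl (h ▸ hc'), ?_⟩
      rintro (h | ⟨-, h⟩)
      · rw [← eventualValue_eq (a₀ := a₀) hc', eventualValue_eq h]
      · exact absurd hc' (h c')
    · rw [eventualValue, dif_neg h]
      rw [not_exists] at h
      refine ⟨fun hc => Or.inr ⟨hc, h⟩, ?_⟩
      rintro (hc | ⟨hc, -⟩)
      · exact absurd hc (h c)
      · exact hc
  simp only [Set.mem_singleton_iff, hiff]
  fun_prop

end EventualValue

section Limit

variable {V Ω α : Type*} [MeasurableSpace Ω] [MeasurableSpace.CountablyGenerated Ω]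
  {G : SimpleGraph V} [G.LocallyFinite] {red : α} {R : ℕ} {q : ℕ → Rule α} {x : V → Ω}

/-- The labelling after `i` rounds, starting from the all-red one and following the rules `q` in
turn. -/
noncomputable def roundLabelling (G : SimpleGraph V) [G.LocallyFinite] (red : α) (R : ℕ)
    (q : ℕ → Rule α) (x : V → Ω) : ℕ → V → α
  | 0 => fun _ => red
  | i + 1 => step G red R (q i) x (roundLabelling G red R q x i)

/-- The labelling to which the rounds converge pointwise; vertices at which they do not converge
are red. -/
noncomputable def limitLabelling (G : SimpleGraph V) [G.LocallyFinite] (red : α) (R : ℕ)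
    (q : ℕ → Rule α) (x : V → Ω) : V → α := fun u =>
  eventualValue red fun i => roundLabelling G red R q x i u

lemma isProper_roundLabelling (hG : G.Connected) (i : ℕ) :
    IsProper G red (roundLabelling G red R q x i) := by
  induction i with
  | zero => exact fun _ _ _ _ => rfl
  | succ i ih => exact isProper_step hG ih

lemma roundLabelling_comp_iso (hG : G.Connected) (φ : G ≃g G) (i : ℕ) :
    roundLabelling G red R q (x ∘ φ) i = roundLabelling G red R q x i ∘ φ := by
  induction i with
  | zero => rfl
  | succ i ih => rw [roundLabelling, ih, step_comp_iso hG, roundLabelling]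

lemma limitLabelling_comp_iso (hG : G.Connected) (φ : G ≃g G) :
    limitLabelling G red R q (x ∘ φ) = limitLabelling G red R q x ∘ φ := by
  ext u
  simp only [limitLabelling, roundLabelling_comp_iso hG, Function.comp_apply]

/-- The vertex `v` is a centre of the `i`-th round. -/
def IsCenterAt (G : SimpleGraph V) [G.LocallyFinite] (red : α) (R : ℕ) (q : ℕ → Rule α)
    (x : V → Ω) (i : ℕ) (v : V) : Prop :=
  IsCenter G red R (q i) x (roundLabelling G red R q x i) v

lemma isCenterAt_comp_iso (hG : G.Connected) (φ : G ≃g G) {i : ℕ} {v : V} :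
    IsCenterAt G red R q (x ∘ φ) i v ↔ IsCenterAt G red R q x i (φ v) := by
  rw [IsCenterAt, roundLabelling_comp_iso hG, isCenter_comp_iso hG, IsCenterAt]

lemma eventually_roundLabelling_eq
    (hcenter : ∀ v, ∀ᶠ i in Filter.atTop, ¬ IsCenterAt G red R q x i v) (u : V) :
    ∀ᶠ i in Filter.atTop, roundLabelling G red R q x i u = limitLabelling G red R q x u := by
  have hball : ∀ᶠ i in Filter.atTop, ∀ v ∈ closedBall G u R, ¬ IsCenterAt G red R q x i v :=
    (Filter.eventually_all_finset _).2 fun v _ => hcenter v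
  exact eventually_eq_eventualValue <| hball.mono fun i hi => step_of_forall_not_isCenter hi

theorem isLocallyOptimal_limitLabelling [MeasurableSpace.SeparatesPoints Ω] (hG : G.Connected)
    (hx : Function.Injective x) (hq : ∀ r, ∃ᶠ i in Filter.atTop, q i = r)
    (hcenter : ∀ v, ∀ᶠ i in Filter.atTop, ¬ IsCenterAt G red R q x i v) :
    IsLocallyOptimal G red R (limitLabelling G red R q x) where
  isProper := isProper_of_forall_adj fun u v _ => by
    obtain ⟨i, hu, hv⟩ := ((eventually_roundLabelling_eq hcenter u).and
      (eventually_roundLabelling_eq hcenter v)).exists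
    exact ⟨_, isProper_roundLabelling hG i, hu, hv⟩
  not_improves v l' himproves := by
    obtain ⟨r, hr⟩ := himproves.exists_rule_isCenter hG hx
    have hagree : ∀ᶠ i in Filter.atTop, ∀ u ∈ closedBall G v (R + 1),
        roundLabelling G red R q x i u = limitLabelling G red R q x u :=
      (Filter.eventually_all_finset _).2 fun u _ => eventually_roundLabelling_eq hcenter u
    obtain ⟨i, rfl, hi, hnot⟩ := ((hq r).and_eventually (hagree.and (hcenter v))).exists
    exact hnot (hr _ (isProper_roundLabelling hG i) hi)

lemma exists_seq_frequently_eq (β : Type*) [Countable β] [Nonempty β] :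
    ∃ q : ℕ → β, ∀ r, ∃ᶠ i in Filter.atTop, q i = r := by
  obtain ⟨e, he⟩ := exists_surjective_nat β
  refine ⟨fun i => e i.unpair.1, fun r => Filter.frequently_atTop.2 fun j => ?_⟩
  obtain ⟨k, rfl⟩ := he r
  exact ⟨Nat.pair k j, Nat.right_le_pair k j, by simp⟩

end Limit

section Measurability

variable {V Ω α X : Type*} [MeasurableSpace Ω] [MeasurableSpace X] [MeasurableSpace α]
  {G : SimpleGraph V} {red : α} {f g : X → V → α}

lemma measurable_patch [G.LocallyFinite] {R : ℕ} {v : V} (hf : Measurable f) (hg : Measurable g) :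
    Measurable fun x => patch G R v (f x) (g x) := by
  refine measurable_pi_lambda _ fun u => ?_
  by_cases hu : u ∈ closedBall G v R
  · simp only [patch_of_mem hu]
    fun_prop
  · simp only [patch_of_notMem hu]
    fun_prop

@[fun_prop]
lemma measurable_tag [MeasurableSpace.CountablyGenerated Ω] (n : ℕ) :
    Measurable (tag n : Ω → Fin n → Bool) :=
  measurable_pi_lambda _ fun _ =>
    (measurable_pi_apply _).comp (MeasurableSpace.measurable_mapNatBool Ω)

@[fun_prop]
lemma measurable_target [MeasurableSpace.CountablyGenerated Ω] (q : Rule α) :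
    Measurable (q.target : (V → Ω) → V → α) :=
  measurable_pi_lambda _ fun u => Measurable.of_discrete.comp
    ((measurable_tag q.depth).comp (measurable_pi_apply u))

variable [DiscreteMeasurableSpace α] [Countable α]

lemma measurable_card_redSet [G.LocallyFinite] {R : ℕ} {v : V} (hf : Measurable f) :
    Measurable fun x => (redSet G red R v (f x)).card := by
  classical
  simp only [redSet, Finset.card_filter]
  refine Finset.measurable_fun_sum _ fun u _ => ?_
  refine Measurable.ite (measurableSet_setOfPred.2 ?_) measurable_const measurable_const
  fun_prop

variable [Countable V]

lemma measurable_slides (hf : Measurable f) (v m : V) :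
    Measurable fun x => Slides G red (f x) v m := by
  have hiff : ∀ x, Slides G red (f x) v m ↔ f x v = red ∧ m ∉ segment G v m ∧
      (∀ u ∈ segment G v m, f x (toward G m u) ≠ red) ∧
      ∀ u ∈ segment G v m, ∀ y, G.Adj u y → y ∉ segment G v m → y ≠ m →
        f x y ≠ f x (toward G m u) :=
    fun x => ⟨fun ⟨hv, ⟨h₁, h₂, h₃⟩⟩ => ⟨hv, h₁, h₂, h₃⟩,
      fun ⟨hv, h₁, h₂, h₃⟩ => ⟨hv, ⟨h₁, h₂, h₃⟩⟩⟩
  simp only [hiff]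
  fun_prop

lemma measurable_isProper (hf : Measurable f) : Measurable fun x => IsProper G red (f x) := by
  unfold IsProper
  fun_prop

variable [G.LocallyFinite] {R : ℕ}

lemma measurable_improves {v : V} (hf : Measurable f) (hg : Measurable g) :
    Measurable fun x => Improves G red R v (f x) (g x) := by
  have hiff : ∀ x, Improves G red R v (f x) (g x) ↔
      (∀ u ∉ closedBall G v R, g x u = f x u) ∧ IsProper G red (g x) ∧
        (redSet G red R v (g x)).card < (redSet G red R v (f x)).card :=
    fun x => ⟨fun ⟨h₁, h₂, h₃⟩ => ⟨h₁, h₂, h₃⟩, fun ⟨h₁, h₂, h₃⟩ => ⟨h₁, h₂, h₃⟩⟩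
  simp only [hiff]
  refine .and (by fun_prop) (.and (measurable_isProper hg) ?_)
  exact measurableSet_setOfPred.1
    (measurableSet_lt (measurable_card_redSet hg) (measurable_card_redSet hf))

variable [MeasurableSpace.CountablyGenerated Ω] {f : (V → Ω) → V → α}

lemma measurable_isCenter (hf : Measurable f) (q : Rule α) (v : V) :
    Measurable fun x => IsCenter G red R q x (f x) v := by
  have hiff : ∀ x, IsCenter G red R q x (f x) v ↔ tag q.depth (x v) = q.centerTag ∧
      (∀ u ∈ closedBall G v (2 * R + 1), ∀ w ∈ closedBall G v (2 * R + 1),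
        tag q.depth (x u) = tag q.depth (x w) → u = w) ∧
      Improves G red R v (f x) (patch G R v (q.target x) (f x)) :=
    fun x => ⟨fun ⟨h₁, h₂, h₃⟩ => ⟨h₁, fun u hu w hw => h₂ hu hw, h₃⟩,
      fun ⟨h₁, h₂, h₃⟩ => ⟨h₁, fun u hu w hw => h₂ u hu w hw, h₃⟩⟩
  simp only [hiff]
  exact .and (by fun_prop) (.and (by fun_prop)
    (measurable_improves hf (measurable_patch (measurable_target q) hf)))

lemma measurable_step (hf : Measurable f) (q : Rule α) :
    Measurable fun x => step G red R q x (f x) := by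
  classical
  refine measurable_pi_lambda _ fun u => Measurable.ite (measurableSet_setOfPred.2 ?_)
    (by fun_prop) (by fun_prop)
  exact .exists fun v => .and measurable_const (measurable_isCenter hf q v)

lemma measurable_roundLabelling (q : ℕ → Rule α) (i : ℕ) :
    Measurable fun x : V → Ω => roundLabelling G red R q x i := by
  induction i with
  | zero => exact measurable_const
  | succ i ih => exact measurable_step ih (q i)

lemma measurable_isCenterAt (q : ℕ → Rule α) (i : ℕ) (v : V) :
    Measurable fun x : V → Ω => IsCenterAt G red R q x i v :=
  measurable_isCenter (measurable_roundLabelling q i) (q i) v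

lemma measurable_limitLabelling (q : ℕ → Rule α) :
    Measurable (limitLabelling G red R q : (V → Ω) → V → α) :=
  measurable_pi_lambda _ fun u => (measurable_eventualValue red).comp <|
    measurable_pi_lambda _ fun i => (measurable_pi_apply u).comp (measurable_roundLabelling q i)

end Measurability

section Invariance

variable {V Ω : Type*} [MeasurableSpace Ω] {G : SimpleGraph V} {μ : Measure (V → Ω)}

/-- The law `μ` of a random family of seeds is invariant under the automorphisms of `G`. -/
def IsInvariant (G : SimpleGraph V) (μ : Measure (V → Ω)) : Prop :=
  ∀ φ : G ≃g G, MeasurePreserving (fun x : V → Ω => x ∘ φ) μ μ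

lemma isInvariant_infinitePi (G : SimpleGraph V) (ν : Measure Ω) [IsProbabilityMeasure ν] :
    IsInvariant G (Measure.infinitePi fun _ : V => ν) := fun φ =>
  ⟨by fun_prop, Measure.map_infinitePi_infinitePi_of_inj φ.injective⟩

lemma ae_injective_infinitePi [Countable V] [MeasurableEq Ω] (ν : Measure Ω)
    [IsProbabilityMeasure ν] [NullSingletonClass ν] :
    ∀ᵐ x ∂Measure.infinitePi fun _ : V => ν, Function.Injective x := by
  have hne : ∀ u v : V, u ≠ v → ∀ᵐ x ∂Measure.infinitePi fun _ : V => ν, x u ≠ x v := by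
    intro u v huv
    have hprod : ∀ᵐ y ∂ν.prod ν, y.1 ≠ y.2 := by
      refine (Measure.ae_prod_iff_ae_ae (measurableSet_diagonal (α := Ω)).compl).2 ?_
      exact .of_forall fun a => (ν.ae_ne a).mono fun _ => Ne.symm
    rw [← Measure.infinitePi_map_eval_prod (P := fun _ : V => ν) huv] at hprod
    exact ae_of_ae_map (f := fun x : V → Ω => (x u, x v)) (by fun_prop) hprod
  simp only [← ae_all_iff] at hne
  filter_upwards [hne] with x hx u v
  exact not_imp_not.1 (hx u v)

/-- The mass transport principle for a single pair of vertices. -/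
lemma IsInvariant.measure_swap [G.LocallyFinite] (hμ : IsInvariant G μ) (hG : G.IsTree) {d : ℕ}
    (hreg : G.IsRegularOfDegree d) {E : V → V → Set (V → Ω)} (hE : ∀ u v, MeasurableSet (E u v))
    (hcomp : ∀ (φ : G ≃g G) (u v : V), ∀ x ∈ E (φ u) (φ v), x ∘ φ ∈ E u v) (u v : V) :
    μ (E u v) = μ (E v u) := by
  have measure_swap_le : ∀ u v, μ (E v u) ≤ μ (E u v) := by
    intro u v
    obtain ⟨φ, hu, hv⟩ := exists_iso_swap hG hreg u v
    calc μ (E v u)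
        = μ (E (φ u) (φ v)) := by rw [hu, hv]
      _ ≤ μ ((fun x : V → Ω => x ∘ φ) ⁻¹' E u v) := measure_mono (hcomp φ u v)
      _ = μ (E u v) := (hμ φ).measure_preimage (hE u v).nullMeasurableSet
  exact (measure_swap_le v u).antisymm (measure_swap_le u v)

end Invariance

section Density

open scoped Classical in
lemma sum_measure_inter_eq_lintegral {X ι : Type*} [MeasurableSpace X] (μ : Measure X)
    {C : Set X} {A : ι → Set X} (hA : ∀ a, MeasurableSet (A a)) (s : Finset ι) :
    ∑ a ∈ s, μ (C ∩ A a) = ∫⁻ x in C, (Finset.card {a ∈ s | x ∈ A a} : ENNReal) ∂μ := by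
  have hcard : ∀ x, (Finset.card {a ∈ s | x ∈ A a} : ENNReal) =
      ∑ a ∈ s, (A a).indicator 1 x := fun x => by
    simp only [Finset.card_filter, Nat.cast_sum, Nat.cast_ite, Nat.cast_one, Nat.cast_zero,
      Set.indicator_apply, Pi.one_apply]
  simp only [hcard]
  rw [lintegral_finsetSum _ fun a _ => measurable_one.indicator (hA a)]
  refine Finset.sum_congr rfl fun a _ => ?_
  rw [lintegral_indicator_one (hA a), Measure.restrict_apply (hA a), Set.inter_comm]

lemma measure_diff_add_sum_measure_inter {X ι : Type*} [MeasurableSpace X] (μ : Measure X)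
    {C : ι → Set X} {A : Set X} {s : Finset ι} (hC : ∀ a, MeasurableSet (C a))
    (hA : MeasurableSet A) (hdisj : (s : Set ι).PairwiseDisjoint C) :
    μ (A \ ⋃ a ∈ s, C a) + ∑ a ∈ s, μ (C a ∩ A) = μ A := by
  rw [← measure_biUnion_finset (hdisj.mono fun _ => Set.inter_subset_left)
    fun a _ => (hC a).inter hA, ← Set.iUnion₂_inter, Set.inter_comm]
  exact measure_sdiff_add_inter A (s.measurableSet_biUnion fun a _ => hC a)

variable {V Ω α : Type*} [Countable V] [MeasurableSpace Ω] [MeasurableSpace.CountablyGenerated Ω]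
  [MeasurableSpace α] [DiscreteMeasurableSpace α] [Countable α]
  {G : SimpleGraph V} [G.LocallyFinite] {red : α} {R : ℕ} {q : ℕ → Rule α} {μ : Measure (V → Ω)}

lemma measurableSet_isCenterAt (i : ℕ) (v : V) :
    MeasurableSet {x : V → Ω | IsCenterAt G red R q x i v} :=
  measurableSet_setOfPred.2 (measurable_isCenterAt q i v)

lemma measurableSet_roundLabelling_eq (i : ℕ) (v : V) (c : α) :
    MeasurableSet {x : V → Ω | roundLabelling G red R q x i v = c} :=
  (measurable_pi_apply v).comp (measurable_roundLabelling q i) (measurableSet_singleton c)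

lemma measure_succ_red_add_sum (hG : G.Connected) (i : ℕ) (u : V) :
    μ {x | roundLabelling G red R q x (i + 1) u = red} + ∑ v ∈ closedBall G u R,
        μ ({x | IsCenterAt G red R q x i v} ∩ {x | roundLabelling G red R q x i u = red}) =
      μ {x | roundLabelling G red R q x i u = red} + ∑ v ∈ closedBall G u R,
        μ ({x | IsCenterAt G red R q x i v} ∩
          {x | roundLabelling G red R q x (i + 1) u = red}) := by
  set C : V → Set (V → Ω) := fun v => {x | IsCenterAt G red R q x i v}
  have hdisj : (closedBall G u R : Set V).PairwiseDisjoint C := by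
    intro v hv w hw hvw
    refine Set.disjoint_left.2 fun x hxv hxw => hvw (IsCenter.eq hxv hxw ?_)
    refine closedBall_mono hG ?_ (mem_closedBall_add hG ((mem_closedBall_comm hG).1 hv) hw)
    omega
  have hdiff : {x | roundLabelling G red R q x (i + 1) u = red} \ ⋃ v ∈ closedBall G u R, C v =
      {x | roundLabelling G red R q x i u = red} \ ⋃ v ∈ closedBall G u R, C v := by
    ext x
    refine and_congr_left fun hx => ?_
    have hstep : roundLabelling G red R q x (i + 1) u = roundLabelling G red R q x i u :=
      step_of_forall_not_isCenter fun v hv hcenter => hx (Set.mem_iUnion₂_of_mem hv hcenter)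
    exact iff_of_eq (congrArg (· = red) hstep)
  rw [← measure_diff_add_sum_measure_inter μ (measurableSet_isCenterAt i)
      (measurableSet_roundLabelling_eq (i + 1) u red) hdisj,
    ← measure_diff_add_sum_measure_inter μ (measurableSet_isCenterAt i)
      (measurableSet_roundLabelling_eq i u red) hdisj, hdiff]
  exact add_right_comm _ _ _

lemma sum_add_measure_isCenterAt_le (hG : G.Connected) (i : ℕ) (u : V) :
    ∑ v ∈ closedBall G u R, μ ({x | IsCenterAt G red R q x i u} ∩
        {x | roundLabelling G red R q x (i + 1) v = red}) + μ {x | IsCenterAt G red R q x i u} ≤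
      ∑ v ∈ closedBall G u R, μ ({x | IsCenterAt G red R q x i u} ∩
        {x | roundLabelling G red R q x i v = red}) := by
  classical
  rw [sum_measure_inter_eq_lintegral μ (measurableSet_roundLabelling_eq (i + 1) · red),
    sum_measure_inter_eq_lintegral μ (measurableSet_roundLabelling_eq i · red),
    ← setLIntegral_one, ← lintegral_add_right _ measurable_const]
  refine setLIntegral_mono' (measurableSet_isCenterAt i u) fun x hx => ?_
  have hlt := IsCenter.card_redSet_step_lt hG hx
  simp only [redSet] at hlt
  exact_mod_cast hlt

lemma measure_succ_red_add_measure_isCenterAt_le [IsFiniteMeasure μ] (hμ : IsInvariant G μ)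
    (hG : G.IsTree) {d : ℕ} (hreg : G.IsRegularOfDegree d) (i : ℕ) (u : V) :
    μ {x | roundLabelling G red R q x (i + 1) u = red} + μ {x | IsCenterAt G red R q x i u} ≤
      μ {x | roundLabelling G red R q x i u = red} := by
  have hswap : ∀ j v,
      μ ({x | IsCenterAt G red R q x i v} ∩ {x | roundLabelling G red R q x j u = red}) =
        μ ({x | IsCenterAt G red R q x i u} ∩ {x | roundLabelling G red R q x j v = red}) := by
    refine fun j v => hμ.measure_swap hG hreg (E := fun v w =>
      {x | IsCenterAt G red R q x i v} ∩ {x | roundLabelling G red R q x j w = red})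
      (fun v w => (measurableSet_isCenterAt i v).inter (measurableSet_roundLabelling_eq j w red))
      (fun φ v w x hx => ⟨(isCenterAt_comp_iso hG.connected φ).2 hx.1, ?_⟩) v u
    exact (congrFun (roundLabelling_comp_iso hG.connected φ j) w).trans hx.2
  have hsum := measure_succ_red_add_sum (red := red) (R := R) (q := q) (μ := μ) hG.connected i u
  simp only [hswap] at hsum
  have hle := sum_add_measure_isCenterAt_le (red := red) (R := R) (q := q) (μ := μ)
    hG.connected i u
  set after := ∑ v ∈ closedBall G u R, μ ({x | IsCenterAt G red R q x i u} ∩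
    {x | roundLabelling G red R q x (i + 1) v = red})
  have hfin : after ≠ ⊤ := ENNReal.sum_ne_top.2 fun _ _ => measure_ne_top _ _
  refine (ENNReal.add_le_add_iff_left hfin).1 ?_
  rw [add_comm after (μ _), ← hsum, add_left_comm]
  gcongr

lemma tsum_measure_isCenterAt_le [IsFiniteMeasure μ] (hμ : IsInvariant G μ) (hG : G.IsTree)
    {d : ℕ} (hreg : G.IsRegularOfDegree d) (v : V) :
    ∑' i, μ {x | IsCenterAt G red R q x i v} ≤ μ Set.univ := by
  refine ENNReal.tsum_le_of_sum_range_le fun n => ?_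
  suffices μ {x | roundLabelling G red R q x n v = red} +
      ∑ i ∈ Finset.range n, μ {x | IsCenterAt G red R q x i v} ≤ μ Set.univ from
    le_add_self.trans this
  induction n with
  | zero => simpa using measure_mono (Set.subset_univ _)
  | succ n ih =>
    rw [Finset.sum_range_succ, add_comm (Finset.sum _ _), ← add_assoc]
    exact (add_le_add_left
      (measure_succ_red_add_measure_isCenterAt_le hμ hG hreg n v) _).trans ih

lemma ae_isLocallyOptimal_limitLabelling [MeasurableSpace.SeparatesPoints Ω] [IsFiniteMeasure μ]
    (hμ : IsInvariant G μ) (hinj : ∀ᵐ x ∂μ, Function.Injective x) (hG : G.IsTree) {d : ℕ}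
    (hreg : G.IsRegularOfDegree d) (hq : ∀ r, ∃ᶠ i in Filter.atTop, q i = r) :
    ∀ᵐ x ∂μ, IsLocallyOptimal G red R (limitLabelling G red R q x) := by
  have hcenter : ∀ᵐ x ∂μ, ∀ v, ∀ᶠ i in Filter.atTop, ¬ IsCenterAt G red R q x i v :=
    ae_all_iff.2 fun v => ae_eventually_notMem <|
      ne_top_of_le_ne_top (measure_ne_top μ Set.univ) (tsum_measure_isCenterAt_le hμ hG hreg v)
  filter_upwards [hcenter, hinj] with x hx hx_inj
  exact isLocallyOptimal_limitLabelling hG.connected hx_inj hq hx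

end Density

section RedDensity

variable {V Ω α : Type*} [Countable V] [MeasurableSpace Ω] [Fintype α] [MeasurableSpace α]
  [DiscreteMeasurableSpace α] {G : SimpleGraph V} [G.LocallyFinite] {red : α} {μ : Measure (V → Ω)}

theorem mul_measure_red_le_of_ae_isLocallyOptimal (hμ : IsInvariant G μ) (hG : G.IsTree) {d : ℕ}
    (hreg : G.IsRegularOfDegree d) (hα : d + 4 ≤ 2 * Fintype.card α) {K : ℕ}
    {f : (V → Ω) → V → α} (hf : Measurable f)
    (hcomp : ∀ (φ : G ≃g G) (x : V → Ω), f (x ∘ φ) = f x ∘ φ)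
    (hopt : ∀ᵐ x ∂μ, IsLocallyOptimal G red (2 * K) (f x)) (v : V) :
    (K + 1) * μ {x | f x v = red} ≤ μ Set.univ := by
  classical
  have hslides : ∀ u w, MeasurableSet {x | Slides G red (f x) u w} := fun u w =>
    measurableSet_setOfPred.2 (measurable_slides hf u w)
  calc (K + 1) * μ {x | f x v = red}
      = ∫⁻ _ in {x | f x v = red}, (K + 1) ∂μ := (setLIntegral_const _ _).symm
    _ ≤ ∫⁻ x in {x | f x v = red},
          (Finset.card {w ∈ closedBall G v K | Slides G red (f x) v w} : ENNReal) ∂μ := by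
        refine setLIntegral_mono_ae' ?_ (hopt.mono fun x hx hv => ?_)
        · exact (measurable_pi_apply v).comp hf (measurableSet_singleton red)
        · exact_mod_cast hx.lt_card_slides_from hG hreg hα hv
    _ = ∑ w ∈ closedBall G v K, μ ({x | f x v = red} ∩ {x | Slides G red (f x) v w}) :=
        (sum_measure_inter_eq_lintegral μ (hslides v) _).symm
    _ ≤ ∑ w ∈ closedBall G v K, μ (Set.univ ∩ {x | Slides G red (f x) w v}) := by
        refine Finset.sum_le_sum fun w _ => ?_
        rw [Set.univ_inter, ← hμ.measure_swap hG hreg hslides fun φ u w x hx =>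
          show Slides G red (f (x ∘ φ)) u w from hcomp φ x ▸ Slides.comp_iso hG φ hx]
        exact measure_mono Set.inter_subset_right
    _ = ∫⁻ x in Set.univ,
          (Finset.card {w ∈ closedBall G v K | Slides G red (f x) w v} : ENNReal) ∂μ :=
        sum_measure_inter_eq_lintegral μ (fun w => hslides w v) _
    _ ≤ ∫⁻ _ in Set.univ, 1 ∂μ :=
        setLIntegral_mono_ae' .univ <| hopt.mono fun x hx _ => by
          exact_mod_cast hx.card_slides_to_le_one hG v
    _ = μ Set.univ := setLIntegral_one _

end RedDensity

end RedLabelling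

open RedLabelling in
theorem fiid_red_labelling_of_T4_general {V Ω α : Type*} [Countable V] {G : SimpleGraph V}
    [G.LocallyFinite] (hG : G.IsTree) {d : ℕ} (hreg : G.IsRegularOfDegree d)
    [MeasurableSpace Ω] [MeasurableSpace.CountablyGenerated Ω] [MeasurableSpace.SeparatesPoints Ω]
    {μ : Measure (V → Ω)} [IsProbabilityMeasure μ] (hμ : IsInvariant G μ)
    (hinj : ∀ᵐ x ∂μ, Function.Injective x)
    [Fintype α] [MeasurableSpace α] [DiscreteMeasurableSpace α] (red : α)
    (hα : d + 4 ≤ 2 * Fintype.card α) {ε : ENNReal} (hε : ε ≠ 0) :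
    ∃ f : (V → Ω) → V → α, Measurable f ∧
      (∀ (φ : G ≃g G) (x : V → Ω) (v : V),
        f (fun u => x (φ.symm u)) v = f x (φ.symm v)) ∧
      (∀ᵐ x ∂μ, ∀ u v : V, G.Adj u v → f x v ≠ red → f x u ≠ f x v) ∧
      ∀ v : V, μ {x | f x v = red} ≤ ε := by
  obtain ⟨K, hK⟩ := ENNReal.exists_inv_nat_lt hε
  have : Nonempty (Rule α) := ⟨⟨0, finZeroElim, fun _ => red⟩⟩
  obtain ⟨q, hq⟩ := exists_seq_frequently_eq (Rule α)
  have hopt := ae_isLocallyOptimal_limitLabelling (red := red) (R := 2 * K) hμ hinj hG hreg hq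
  have hcomp (φ : G ≃g G) (x : V → Ω) := limitLabelling_comp_iso (red := red) (R := 2 * K)
    (q := q) (x := x) hG.connected φ
  refine ⟨limitLabelling G red (2 * K) q, measurable_limitLabelling q,
    fun φ x v => congrFun (hcomp φ.symm x) v, ?_, fun v => ?_⟩
  · filter_upwards [hopt] with x hx u v huv hv huv_eq
    exact hv (hx.isProper huv.symm huv_eq.symm)
  · have hred := mul_measure_red_le_of_ae_isLocallyOptimal hμ hG hreg hα
      (measurable_limitLabelling q) hcomp hopt v
    rw [measure_univ, mul_comm, ← ENNReal.le_inv_iff_mul_le] at hred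
    exact hred.trans <| (ENNReal.inv_le_inv.2 le_self_add).trans hK.le

/-- For every ε > 0, the 4-regular tree admits an fiid labelling with 4 labels which is
a.e. proper (at each non-red vertex) and assigns the label 3 to a given vertex with probability at most ε. -/
theorem fiid_red_labelling_of_T4
    (V : Type) [Countable V] [Infinite V]
    (G : SimpleGraph V) (hconn : G.Connected) (hacyc : G.IsAcyclic)
    (hreg : ∀ v : V, (G.neighborSet v).ncard = 4)
    (μ : Measure (V → ℝ)) [IsProbabilityMeasure μ]
    (hμ : ∀ s : Finset V,
      Measure.map (fun (x : V → ℝ) (v : s) => x v) μ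
        = Measure.pi (fun _ : s => volume.restrict (Set.Icc (0:ℝ) 1)))
    (ε : ℝ) (hε : 0 < ε) :
    ∃ f : (V → ℝ) → (V → Fin 4),
      Measurable f ∧
      (∀ (φ : G ≃g G) (x : V → ℝ) (v : V),
        f (fun u => x (φ.symm u)) v = f x (φ.symm v)) ∧
      (∀ᵐ x ∂μ, ∀ u v : V, G.Adj u v → f x v ≠ 3 → f x u ≠ f x v) ∧
      (∀ v : V, μ {x | f x v = 3} ≤ ENNReal.ofReal ε) := by
  have : IsProbabilityMeasure (volume.restrict (Set.Icc (0 : ℝ) 1)) := ⟨by simp⟩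
  have hμ_eq : μ = Measure.infinitePi fun _ : V => volume.restrict (Set.Icc (0 : ℝ) 1) :=
    IsProjectiveLimit.unique (fun s => hμ s) (Measure.isProjectiveLimit_infinitePi _)
  have : G.LocallyFinite := fun v =>
    (Set.finite_of_ncard_ne_zero (by rw [hreg v]; decide)).fintype
  have hdeg : G.IsRegularOfDegree 4 := fun v => by
    rw [← hreg v, ← G.card_neighborSet_eq_degree, Set.ncard_eq_toFinset_card', Set.toFinset_card]
  rw [hμ_eq]
  exact fiid_red_labelling_of_T4_general ⟨hconn, hacyc⟩ hdeg
    (RedLabelling.isInvariant_infinitePi G _) (RedLabelling.ae_injective_infinitePi _) 3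
    (by simp) (ENNReal.ofReal_pos.2 hε).ne'
end
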